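/- At the left endpoint x = a, the symmetric partial sums S_N(a) = ∑_{n=−N}^{N} C_n (f_n(a), g_n(a)) converge as N → ∞ to the vector (1/2)·[[1 − cos 2α, −sin 2α], [−sin 2α, 1 + cos 2α]]·(F₁(a), F₂(a))ᵀ, i.e., to (sin²α·F₁(a) − sin α cos α·F₂(a), −sin α cos α·F₁(a) + cos²α·F₂(a)). -/

import Mathlib

/-- The pair `(f,g)`, continuously differentiable on `[a,b]`, satisfies the
Dirac-type system with parameter `lam`:
`-g' + t g + (p - lam ρ) f = 0` and `f' + t f + (q - lam ρ) g = 0` on `[a,b]`. -/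
def SatisfiesDiracSystem (a b : ℝ) (p q t ρ : ℝ → ℝ) (lam : ℝ) (f g : ℝ → ℝ) : Prop :=
  ∃ f' g' : ℝ → ℝ,
    (∀ x ∈ Set.Icc a b, HasDerivWithinAt f (f' x) (Set.Icc a b) x) ∧
    (∀ x ∈ Set.Icc a b, HasDerivWithinAt g (g' x) (Set.Icc a b) x) ∧
    ContinuousOn f' (Set.Icc a b) ∧ ContinuousOn g' (Set.Icc a b) ∧
    (∀ x ∈ Set.Icc a b, -g' x + t x * g x + (p x - lam * ρ x) * f x = 0) ∧
    (∀ x ∈ Set.Icc a b, f' x + t x * f x + (q x - lam * ρ x) * g x = 0)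

/-- The separated boundary conditions
`f(a) cos α + g(a) sin α = 0` and `f(b) cos β + g(b) sin β = 0`. -/
def DiracBC (a b α β : ℝ) (f g : ℝ → ℝ) : Prop :=
  f a * Real.cos α + g a * Real.sin α = 0 ∧
  f b * Real.cos β + g b * Real.sin β = 0

/-- `lam` is an eigenvalue of the Dirac-type boundary-value problem. -/
def IsDiracEigenvalue (a b : ℝ) (p q t ρ : ℝ → ℝ) (α β lam : ℝ) : Prop :=
  ∃ f g : ℝ → ℝ,
    SatisfiesDiracSystem a b p q t ρ lam f g ∧
    (∃ x ∈ Set.Icc a b, (f x ≠ 0 ∨ g x ≠ 0)) ∧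
    DiracBC a b α β f g

namespace DiracAux
open Set Filter Topology MeasureTheory


theorem unit_of_pow {R : Type*} [NormedRing R] [CompleteSpace R] (T : R) (n : ℕ) (h : ‖T ^ n‖ < 1) :
    IsUnit (1 - T) := by
  have hu : IsUnit (1 - T ^ n) := isUnit_one_sub_of_norm_lt_one h
  have hc : Commute (1 - T) (∑ i ∈ Finset.range n, T ^ i) := by
    apply Commute.sub_left (Commute.one_left _)
    exact Commute.sum_right _ _ _ fun i _ => (Commute.refl T).pow_right i
  rw [← mul_neg_geom_sum] at hu
  exact (hc.isUnit_mul_iff.1 hu).1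

theorem diff_inv {R : Type*} [NormedRing R] [NormedAlgebra ℂ R] [CompleteSpace R] (S₀ S₁ : R)
    (h : ∀ l : ℂ, IsUnit (1 - (S₀ + l • S₁))) :
    Differentiable ℂ fun l : ℂ => Ring.inverse (1 - (S₀ + l • S₁)) := by
  intro l
  have hd : Differentiable ℂ fun l : ℂ => 1 - (S₀ + l • S₁) := by fun_prop
  exact (differentiableAt_inverse (𝕜 := ℂ) (h l)).comp l (hd l)

/-- Volterra operator. -/
noncomputable def volt (a b : ℝ) (hab : a ≤ b) (A : ℝ → (ℂ × ℂ) →L[ℂ] (ℂ × ℂ)) (hA : Continuous A) :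
    C(Icc a b, ℂ × ℂ) →ₗ[ℂ] C(Icc a b, ℂ × ℂ) where
  toFun u := ⟨fun x => ∫ s in b..(x : ℝ), A s (u (projIcc a b hab s)), by
    have h : Continuous fun s => A s (u (projIcc a b hab s)) :=
      hA.clm_apply (u.continuous.comp continuous_projIcc)
    exact (intervalIntegral.continuous_primitive (fun _ _ => h.intervalIntegrable _ _) b).comp
      continuous_subtype_val⟩
  map_add' u v := by
    ext1 x
    have h : ∀ u : C(Icc a b, ℂ × ℂ), Continuous fun s => A s (u (projIcc a b hab s)) := fun u =>
      hA.clm_apply (u.continuous.comp continuous_projIcc)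
    simp only [ContinuousMap.coe_mk, ContinuousMap.add_apply, map_add]
    exact intervalIntegral.integral_add ((h u).intervalIntegrable _ _) ((h v).intervalIntegrable _ _)
  map_smul' c u := by
    ext1 x
    simp only [ContinuousMap.coe_mk, ContinuousMap.smul_apply, map_smul, RingHom.id_apply]
    exact intervalIntegral.integral_smul _ _

theorem volt_apply (a b : ℝ) (hab : a ≤ b) (A : ℝ → (ℂ × ℂ) →L[ℂ] (ℂ × ℂ)) (hA : Continuous A)
    (u : C(Icc a b, ℂ × ℂ)) (x : Icc a b) :
    volt a b hab A hA u x = ∫ s in b..(x : ℝ), A s (u (projIcc a b hab s)) := rfl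

theorem volt_bound (a b : ℝ) (hab : a ≤ b) (A : ℝ → (ℂ × ℂ) →L[ℂ] (ℂ × ℂ)) (hA : Continuous A)
    (K : ℝ) (hK0 : 0 ≤ K) (hK : ∀ x ∈ Icc a b, ‖A x‖ ≤ K) (n : ℕ) (u : C(Icc a b, ℂ × ℂ)) (c : ℝ)
    (hu : ∀ x : Icc a b, ‖u x‖ ≤ c * (b - x) ^ n / n.factorial) (x : Icc a b) :
    ‖volt a b hab A hA u x‖ ≤ K * c * (b - x) ^ (n + 1) / (n + 1).factorial := by
  rw [volt_apply, intervalIntegral.integral_symm, norm_neg]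
  have hx := x.2
  have h1 : ‖∫ s in (x : ℝ)..b, A s (u (projIcc a b hab s))‖ ≤
      ∫ s in (x : ℝ)..b, K * (c * (b - s) ^ n / n.factorial) := by
    apply intervalIntegral.norm_integral_le_of_norm_le hx.2
    · refine Eventually.of_forall fun s hs => ?_
      have hs' : s ∈ Icc a b := ⟨hx.1.trans hs.1.le, hs.2⟩
      refine (ContinuousLinearMap.le_opNorm _ _).trans ?_
      have := hu (projIcc a b hab s)
      rw [projIcc_of_mem hab hs'] at this ⊢
      exact mul_le_mul (hK s hs') this (norm_nonneg _) hK0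
    · apply Continuous.intervalIntegrable; fun_prop
  refine h1.trans (le_of_eq ?_)
  have : ∀ s, K * (c * (b - s) ^ n / n.factorial) = (K * c / n.factorial) * (b - s) ^ n := by
    intro s; ring
  simp only [this]
  rw [intervalIntegral.integral_const_mul, intervalIntegral.integral_comp_sub_left (fun s => s ^ n),
    integral_pow, Nat.factorial_succ]
  have : (n.factorial : ℝ) ≠ 0 := by positivity
  push_cast
  field_simp
  simp

/-- Volterra operator as a continuous linear map. -/
noncomputable def voltC (a b : ℝ) (hab : a ≤ b) (A : ℝ → (ℂ × ℂ) →L[ℂ] (ℂ × ℂ)) (hA : Continuous A) :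
    C(Icc a b, ℂ × ℂ) →L[ℂ] C(Icc a b, ℂ × ℂ) :=
  (volt a b hab A hA).mkContinuousOfExistsBound (by
    obtain ⟨K, hK⟩ := isCompact_Icc.exists_bound_of_continuousOn (s := Icc a b) hA.continuousOn
    have hK0 : 0 ≤ K := (norm_nonneg _).trans (hK a (left_mem_Icc.2 hab))
    refine ⟨K * (b - a), fun u => ?_⟩
    rw [ContinuousMap.norm_le _ (by have := sub_nonneg.2 hab; positivity)]
    intro x
    have := volt_bound a b hab A hA K hK0 hK 0 u ‖u‖ (fun x => by simpa using u.norm_coe_le_norm x) x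
    refine this.trans ?_
    simp
    have h2 := x.2.1
    have h3 := norm_nonneg u
    have : K * ‖u‖ * (b - x) ≤ K * ‖u‖ * (b - a) := by gcongr
    linarith)

theorem voltC_apply (a b : ℝ) (hab : a ≤ b) (A : ℝ → (ℂ × ℂ) →L[ℂ] (ℂ × ℂ)) (hA : Continuous A)
    (u : C(Icc a b, ℂ × ℂ)) : voltC a b hab A hA u = volt a b hab A hA u := rfl

theorem voltC_unit (a b : ℝ) (hab : a ≤ b) (A : ℝ → (ℂ × ℂ) →L[ℂ] (ℂ × ℂ)) (hA : Continuous A) :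
    IsUnit (1 - voltC a b hab A hA) := by
  obtain ⟨K, hK⟩ := isCompact_Icc.exists_bound_of_continuousOn (s := Icc a b) hA.continuousOn
  have hK0 : 0 ≤ K := (norm_nonneg _).trans (hK a (left_mem_Icc.2 hab))
  set T := voltC a b hab A hA with hT
  have key : ∀ n : ℕ, ∀ u x, ‖(T ^ n) u x‖ ≤ (K ^ n * ‖u‖) * (b - (x : ℝ)) ^ n / n.factorial := by
    intro n
    induction n with
    | zero => intro u x; simpa using u.norm_coe_le_norm x
    | succ n ih =>
      intro u x
      rw [pow_succ']
      have := volt_bound a b hab A hA K hK0 hK n ((T ^ n) u) _ (ih u) x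
      refine this.trans (le_of_eq ?_)
      ring
  have hba := sub_nonneg.2 hab
  have key2 : ∀ n : ℕ, ‖T ^ n‖ ≤ (K * (b - a)) ^ n / n.factorial := by
    intro n
    refine ContinuousLinearMap.opNorm_le_bound _ (by positivity) fun u => ?_
    rw [ContinuousMap.norm_le _ (by positivity)]
    intro x
    refine (key n u x).trans ?_
    have h2 := x.2.1
    have h3 := sub_nonneg.2 x.2.2
    have : (b - (x : ℝ)) ^ n ≤ (b - a) ^ n := by gcongr
    calc (K ^ n * ‖u‖) * (b - (x : ℝ)) ^ n / n.factorial
        ≤ (K ^ n * ‖u‖) * (b - a) ^ n / n.factorial := by gcongr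
      _ = _ := by rw [mul_pow]; ring
  have hlim := FloorSemiring.tendsto_pow_div_factorial_atTop (K * (b - a))
  obtain ⟨n, hn⟩ := ((tendsto_order.1 hlim).2 1 one_pos).exists
  exact unit_of_pow (R := C(Icc a b, ℂ × ℂ) →L[ℂ] C(Icc a b, ℂ × ℂ)) T n ((key2 n).trans_lt hn)

theorem ode_exist (a b : ℝ) (hab : a ≤ b) (A B : ℝ → (ℂ × ℂ) →L[ℂ] (ℂ × ℂ)) (hA : Continuous A)
    (hB : Continuous B) (v : ℂ × ℂ) :
    ∃ χ : ℂ → C(Icc a b, ℂ × ℂ), Differentiable ℂ χ ∧ ∀ l (x : Icc a b),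
      χ l x = v + ∫ s in b..(x : ℝ), (A s + l • B s) (χ l (projIcc a b hab s)) := by
  have hAB : ∀ l : ℂ, Continuous fun s => A s + l • B s := fun l => hA.add (hB.const_smul l)
  have hV : ∀ l : ℂ, voltC a b hab _ (hAB l) = voltC a b hab A hA + l • voltC a b hab B hB := by
    intro l
    ext1 u; ext1 x
    have h : ∀ (A : ℝ → (ℂ × ℂ) →L[ℂ] (ℂ × ℂ)), Continuous A →
      Continuous fun s => A s (u (projIcc a b hab s)) := fun A hA =>
      hA.clm_apply (u.continuous.comp continuous_projIcc)
    simp only [add_apply, smul_apply,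
      ContinuousMap.add_apply, ContinuousMap.smul_apply, voltC_apply, volt_apply]
    rw [← intervalIntegral.integral_smul]
    exact intervalIntegral.integral_add ((h A hA).intervalIntegrable _ _)
      (((h B hB).const_smul l).intervalIntegrable _ _)
  let T : ℂ → (C(Icc a b, ℂ × ℂ) →L[ℂ] C(Icc a b, ℂ × ℂ)) := fun l =>
    1 - (voltC a b hab A hA + l • voltC a b hab B hB)
  have hTu : ∀ l, IsUnit (T l) := fun l => by
    have := voltC_unit a b hab _ (hAB l)
    rwa [hV] at this
  refine ⟨fun l => Ring.inverse (T l) (ContinuousMap.const _ v), ?_, ?_⟩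
  · have h1 := diff_inv (R := C(Icc a b, ℂ × ℂ) →L[ℂ] C(Icc a b, ℂ × ℂ)) _ _ hTu
    exact h1.clm_apply (differentiable_const _)
  · intro l x
    set u := Ring.inverse (T l) (ContinuousMap.const _ v)
    have h1 : T l u = ContinuousMap.const _ v := by
      show (T l * Ring.inverse (T l)) _ = _
      rw [Ring.mul_inverse_cancel _ (hTu l)]; rfl
    have h2 := congrArg (fun w => w x) h1
    simp only [T, ← hV, sub_apply, ContinuousMap.sub_apply, voltC_apply, volt_apply] at h2
    rw [one_apply_eq_self] at h2
    simp only [ContinuousMap.const_apply] at h2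
    rw [sub_eq_iff_eq_add] at h2
    exact h2

end DiracAux

namespace DiracAux
open Set Filter Topology MeasureTheory


/-- coefficients of the system (extended to the line) -/
structure Dat where
  a : ℝ
  b : ℝ
  hab : a < b
  p : ℝ → ℝ
  q : ℝ → ℝ
  t : ℝ → ℝ
  r : ℝ → ℝ
  hp : ContDiff ℝ 1 p
  hq : ContDiff ℝ 1 q
  ht : ContDiff ℝ 1 t
  hr : ContDiff ℝ 1 r
  rpos : ∀ x ∈ Icc a b, 0 < r x
  α : ℝ
  β : ℝ

/-- solution of the complexified system on `[a,b]` -/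
def Dat.IsSol (D : Dat) (l : ℂ) (X Y : ℝ → ℂ) : Prop :=
  ∀ x ∈ Icc D.a D.b,
    HasDerivWithinAt X (-(D.t x : ℂ) * X x - (D.q x - l * D.r x) * Y x) (Icc D.a D.b) x ∧
    HasDerivWithinAt Y ((D.t x : ℂ) * Y x + (D.p x - l * D.r x) * X x) (Icc D.a D.b) x

/-- weighted distance to the right end point -/
noncomputable def Dat.S (D : Dat) (x : ℝ) : ℝ := ∫ s in x..D.b, D.r s

theorem Dat.hasDerivAt_S (D : Dat) (x : ℝ) : HasDerivAt D.S (-D.r x) x := by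
  have h : Continuous D.r := D.hr.continuous
  exact intervalIntegral.integral_hasDerivAt_left (h.intervalIntegrable _ _)
    (h.stronglyMeasurableAtFilter _ _) h.continuousAt

theorem Dat.S_b (D : Dat) : D.S D.b = 0 := by simp [Dat.S]

theorem Dat.S_anti (D : Dat) {x y : ℝ} (hx : x ∈ Icc D.a D.b) (hy : y ∈ Icc D.a D.b) (h : x ≤ y) :
    D.S y ≤ D.S x := by
  have h1 : AntitoneOn D.S (Icc D.a D.b) := by
    apply antitoneOn_of_deriv_nonpos (convex_Icc _ _)
    · exact fun x _ => (D.hasDerivAt_S x).continuousAt.continuousWithinAt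
    · exact fun x _ => (D.hasDerivAt_S x).differentiableAt.differentiableWithinAt
    · intro x hx
      rw [(D.hasDerivAt_S x).deriv]
      have := D.rpos x (interior_subset hx)
      linarith
  exact h1 hx hy h

theorem Dat.S_nonneg (D : Dat) {x : ℝ} (hx : x ∈ Icc D.a D.b) : 0 ≤ D.S x := by
  have := D.S_anti hx (right_mem_Icc.2 D.hab.le) hx.2
  rwa [D.S_b] at this

theorem Dat.exists_M (D : Dat) : ∃ M : ℝ, 0 ≤ M ∧ ∀ x ∈ Icc D.a D.b, |D.t x| + |D.p x| + |D.q x| ≤ M := by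
  have h : Continuous fun x => |D.t x| + |D.p x| + |D.q x| := by
    have h1 := D.hp.continuous
    have h2 := D.hq.continuous
    have h3 := D.ht.continuous
    fun_prop
  obtain ⟨K, hK⟩ := isCompact_Icc.exists_bound_of_continuousOn (s := Icc D.a D.b) h.continuousOn
  refine ⟨K, (norm_nonneg _).trans (hK D.a (left_mem_Icc.2 D.hab.le)), fun x hx => ?_⟩
  exact (le_abs_self _).trans (hK x hx)

theorem energy_alg (t p q r s T M x1 x2 y1 y2 : ℝ) (hM : |t| + |p| + |q| ≤ M) (hr : 0 < r) :
   0 ≤ (2 * x1 * (-t * x1 - (q - s * r) * y1 - T * r * y2)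
    + 2 * x2 * (-t * x2 - (q - s * r) * y2 + T * r * y1)
    + (2 * y1 * (t * y1 + (p - s * r) * x1 + T * r * x2)
    + 2 * y2 * (t * y2 + (p - s * r) * x2 - T * r * x1)))
    + (x1 ^ 2 + x2 ^ 2 + (y1 ^ 2 + y2 ^ 2)) * (2 * |T| * r + 2 * M) := by
  have e : (2 * x1 * (-t * x1 - (q - s * r) * y1 - T * r * y2)
    + 2 * x2 * (-t * x2 - (q - s * r) * y2 + T * r * y1)
    + (2 * y1 * (t * y1 + (p - s * r) * x1 + T * r * x2)
    + 2 * y2 * (t * y2 + (p - s * r) * x2 - T * r * x1)))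
    = - (2 * t * (x1 ^ 2 + x2 ^ 2 - (y1 ^ 2 + y2 ^ 2))) + (p - q) * (2 * (x1 * y1 + x2 * y2))
      + T * r * (4 * (x2 * y1 - x1 * y2)) := by ring
  rw [e]
  set N := x1 ^ 2 + x2 ^ 2 + (y1 ^ 2 + y2 ^ 2) with hN
  have hN0 : 0 ≤ N := by positivity
  have h1 : |2 * t * (x1 ^ 2 + x2 ^ 2 - (y1 ^ 2 + y2 ^ 2))| ≤ 2 * |t| * N := by
    rw [abs_mul, abs_mul, abs_two]
    gcongr
    rw [abs_le]; constructor <;> nlinarith [sq_nonneg x1, sq_nonneg x2, sq_nonneg y1, sq_nonneg y2]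
  have h2 : |(p - q) * (2 * (x1 * y1 + x2 * y2))| ≤ (|p| + |q|) * N := by
    rw [abs_mul]
    gcongr
    · exact abs_sub _ _
    · rw [abs_le]; constructor <;> nlinarith [sq_nonneg (x1 - y1), sq_nonneg (x2 - y2), sq_nonneg (x1 + y1), sq_nonneg (x2 + y2)]
  have h3 : |T * r * (4 * (x2 * y1 - x1 * y2))| ≤ |T| * r * (2 * N) := by
    rw [abs_mul, abs_mul, abs_of_pos hr]
    gcongr
    rw [abs_le]; constructor <;> nlinarith [sq_nonneg (x2 - y1), sq_nonneg (x1 - y2), sq_nonneg (x2 + y1), sq_nonneg (x1 + y2)]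
  have h4 : (|t| + |p| + |q|) * N ≤ M * N := by gcongr
  have h5 : 0 ≤ (|p| + |q|) * N := by positivity
  have := abs_le.1 h1
  have := abs_le.1 h2
  have := abs_le.1 h3
  nlinarith

theorem Dat.energy (D : Dat) {M : ℝ} (hM : ∀ x ∈ Icc D.a D.b, |D.t x| + |D.p x| + |D.q x| ≤ M)
    {l : ℂ} {X Y : ℝ → ℂ} (h : D.IsSol l X Y) {x y : ℝ} (hx : x ∈ Icc D.a D.b)
    (hy : y ∈ Icc D.a D.b) (hxy : x ≤ y) :
    Complex.normSq (X x) + Complex.normSq (Y x) ≤ (Complex.normSq (X y) + Complex.normSq (Y y)) *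
      Real.exp (2 * |l.im| * (D.S x - D.S y) + 2 * M * (y - x)) := by
  set N : ℝ → ℝ := fun x => (X x).re ^ 2 + (X x).im ^ 2 + ((Y x).re ^ 2 + (Y x).im ^ 2) with hN
  have hNe : ∀ x, Complex.normSq (X x) + Complex.normSq (Y x) = N x := by
    intro x; simp only [hN, Complex.normSq_apply]; ring
  rw [hNe, hNe]
  have hre : ∀ {f : ℝ → ℂ} {f' : ℂ} {x}, HasDerivWithinAt f f' (Icc D.a D.b) x →
      HasDerivWithinAt (fun x => (f x).re) f'.re (Icc D.a D.b) x := by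
    intro f f' x h
    exact Complex.reCLM.hasFDerivAt.comp_hasDerivWithinAt x h
  have him : ∀ {f : ℝ → ℂ} {f' : ℂ} {x}, HasDerivWithinAt f f' (Icc D.a D.b) x →
      HasDerivWithinAt (fun x => (f x).im) f'.im (Icc D.a D.b) x := by
    intro f f' x h
    exact Complex.imCLM.hasFDerivAt.comp_hasDerivWithinAt x h
  set G : ℝ → ℝ := fun x => N x * Real.exp (2 * |l.im| * (- D.S x) + 2 * M * x) with hG
  have hder : ∀ x ∈ Icc D.a D.b, ∃ G', HasDerivWithinAt G G' (Icc D.a D.b) x ∧ 0 ≤ G' := by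
    intro x hx
    obtain ⟨h1, h2⟩ := h x hx
    have hNd := (((hre h1).fun_pow 2).fun_add ((him h1).fun_pow 2)).fun_add
      (((hre h2).fun_pow 2).fun_add ((him h2).fun_pow 2))
    have hE : HasDerivWithinAt (fun x => Real.exp (2 * |l.im| * (- D.S x) + 2 * M * x))
       (Real.exp (2 * |l.im| * (- D.S x) + 2 * M * x) * (2 * |l.im| * (- (-D.r x)) + 2 * M * 1))
       (Icc D.a D.b) x :=
      ((((D.hasDerivAt_S x).fun_neg.const_mul (2 * |l.im|)).fun_add
        ((hasDerivAt_id' x).const_mul (2 * M))).exp).hasDerivWithinAt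
    refine ⟨_, hNd.fun_mul hE, ?_⟩
    have key := energy_alg (D.t x) (D.p x) (D.q x) (D.r x) l.re l.im M (X x).re (X x).im (Y x).re (Y x).im
      (hM x hx) (D.rpos x hx)
    have e0 := (Real.exp_pos (2 * |l.im| * (- D.S x) + 2 * M * x)).le
    have := mul_nonneg key e0
    refine this.trans (le_of_eq ?_)
    simp
    ring
  have hmono : MonotoneOn G (Icc D.a D.b) := by
    apply monotoneOn_of_deriv_nonneg (convex_Icc _ _)
    · intro x hx
      obtain ⟨G', h1, h2⟩ := hder x hx
      exact h1.continuousWithinAt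
    · intro x hx
      obtain ⟨G', h1, h2⟩ := hder x (interior_subset hx)
      exact h1.differentiableWithinAt.mono interior_subset
    · intro x hx
      obtain ⟨G', h1, h2⟩ := hder x (interior_subset hx)
      rw [(h1.hasDerivAt (mem_interior_iff_mem_nhds.1 hx)).deriv]
      exact h2
  have := hmono hx hy hxy
  simp only [hG] at this
  have e : Real.exp (2 * |l.im| * (D.S x - D.S y) + 2 * M * (y - x)) =
    Real.exp (2 * |l.im| * (- D.S y) + 2 * M * y) * (Real.exp (2 * |l.im| * (- D.S x) + 2 * M * x))⁻¹ := by
    rw [← Real.exp_neg, ← Real.exp_add]; congr 1; ring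
  rw [e, ← mul_assoc, ← div_eq_mul_inv, le_div_iff₀ (Real.exp_pos _)]
  exact this

end DiracAux

namespace DiracAux
open Set Filter Topology MeasureTheory


theorem Dat.unique (D : Dat) {l : ℂ} {X Y : ℝ → ℂ} (h : D.IsSol l X Y) (hX : X D.b = 0) (hY : Y D.b = 0)
    {x : ℝ} (hx : x ∈ Icc D.a D.b) : X x = 0 ∧ Y x = 0 := by
  obtain ⟨M, _, hM⟩ := D.exists_M
  have := D.energy hM h hx (right_mem_Icc.2 D.hab.le) hx.2
  rw [hX, hY] at this
  simp at this
  have h1 := Complex.normSq_nonneg (X x)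
  have h2 := Complex.normSq_nonneg (Y x)
  exact ⟨Complex.normSq_eq_zero.1 (by linarith), Complex.normSq_eq_zero.1 (by linarith)⟩

theorem Dat.IsSol.lin (D : Dat) {l : ℂ} {X Y X' Y' : ℝ → ℂ} (h : D.IsSol l X Y) (h' : D.IsSol l X' Y') (c : ℂ) :
    D.IsSol l (fun x => X x - c * X' x) (fun x => Y x - c * Y' x) := by
  intro x hx
  refine ⟨((h x hx).1.fun_sub ((h' x hx).1.const_mul c)).congr_deriv (by ring),
    ((h x hx).2.fun_sub ((h' x hx).2.const_mul c)).congr_deriv (by ring)⟩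

theorem hasDerivWithinAt_conj {f : ℝ → ℂ} {f' : ℂ} {s : Set ℝ} {x : ℝ} (h : HasDerivWithinAt f f' s x) :
    HasDerivWithinAt (fun x => (starRingEnd ℂ) (f x)) ((starRingEnd ℂ) f') s x :=
  (Complex.conjCLE.toContinuousLinearMap.hasFDerivAt).comp_hasDerivWithinAt x h

theorem Dat.IsSol.conj (D : Dat) {l : ℂ} {X Y : ℝ → ℂ} (h : D.IsSol l X Y) :
    D.IsSol ((starRingEnd ℂ) l) (fun x => (starRingEnd ℂ) (X x)) (fun x => (starRingEnd ℂ) (Y x)) := by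
  intro x hx
  refine ⟨(hasDerivWithinAt_conj (h x hx).1).congr_deriv (by simp),
    (hasDerivWithinAt_conj (h x hx).2).congr_deriv (by simp)⟩

/-- coefficients together with the family of solutions fixed by the boundary condition at `b` -/
structure Bun extends Dat where
  X : ℂ → ℝ → ℂ
  Y : ℂ → ℝ → ℂ
  hXc : ∀ l, Continuous (X l)
  hYc : ∀ l, Continuous (Y l)
  hX : ∀ l, ∀ x ∈ Icc a b, HasDerivAt (X l) (-(t x : ℂ) * X l x - (q x - l * r x) * Y l x) x
  hY : ∀ l, ∀ x ∈ Icc a b, HasDerivAt (Y l) ((t x : ℂ) * Y l x + (p x - l * r x) * X l x) x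
  hXb : ∀ l, X l b = Real.sin β
  hYb : ∀ l, Y l b = -Real.cos β
  hdX : Differentiable ℂ fun l => X l a
  hdY : Differentiable ℂ fun l => Y l a
  hdN : ∀ F G : ℝ → ℂ, Continuous F → Continuous G →
    Differentiable ℂ fun l => ∫ x in a..b, (X l x * F x + Y l x * G x)

variable (B : Bun)

theorem Bun.isSol (l : ℂ) : B.IsSol l (B.X l) (B.Y l) := fun x hx =>
  ⟨(B.hX l x hx).hasDerivWithinAt, (B.hY l x hx).hasDerivWithinAt⟩

theorem Bun.eq_smul {l : ℂ} {X Y : ℝ → ℂ} (h : B.IsSol l X Y) (c : ℂ) (hX : X B.b = c * Real.sin B.β)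
    (hY : Y B.b = -c * Real.cos B.β) {x : ℝ} (hx : x ∈ Icc B.a B.b) :
    X x = c * B.X l x ∧ Y x = c * B.Y l x := by
  have := B.toDat.unique (h.lin B.toDat (B.isSol l) c) (by simp only [hX, B.hXb]; ring)
    (by simp only [hY, B.hYb]; ring) hx
  exact ⟨sub_eq_zero.1 this.1, sub_eq_zero.1 this.2⟩

theorem Bun.conj_eq (l : ℂ) {x : ℝ} (hx : x ∈ Icc B.a B.b) :
    B.X ((starRingEnd ℂ) l) x = (starRingEnd ℂ) (B.X l x) ∧
    B.Y ((starRingEnd ℂ) l) x = (starRingEnd ℂ) (B.Y l x) := by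
  have := B.eq_smul ((B.isSol l).conj B.toDat) 1 (by rw [B.hXb, Complex.conj_ofReal, one_mul])
    (by rw [B.hYb]; simp [← Complex.ofReal_cos]) hx
  simp only [one_mul] at this
  exact ⟨this.1.symm, this.2.symm⟩

theorem Bun.bound : ∃ C : ℝ, 0 < C ∧ ∀ l, ∀ x ∈ Icc B.a B.b,
    ‖B.X l x‖ ≤ C * Real.exp (|l.im| * B.S x) ∧ ‖B.Y l x‖ ≤ C * Real.exp (|l.im| * B.S x) := by
  obtain ⟨M, hM0, hM⟩ := B.exists_M
  refine ⟨Real.exp (M * (B.b - B.a)), Real.exp_pos _, fun l x hx => ?_⟩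
  have h := B.energy hM (B.isSol l) hx (right_mem_Icc.2 B.hab.le) hx.2
  rw [B.hXb, B.hYb, Complex.normSq_neg, Complex.normSq_ofReal, Complex.normSq_ofReal, B.S_b] at h
  have h0 : Real.sin B.β * Real.sin B.β + Real.cos B.β * Real.cos B.β = 1 := by
    have := Real.sin_sq_add_cos_sq B.β; nlinarith
  rw [h0, one_mul] at h
  have h2 : Real.exp (2 * |l.im| * (B.S x - 0) + 2 * M * (B.b - x)) ≤
      (Real.exp (M * (B.b - B.a)) * Real.exp (|l.im| * B.S x)) ^ 2 := by
    rw [← Real.exp_add, ← Real.exp_nat_mul, Real.exp_le_exp]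
    have := hx.1
    push_cast
    nlinarith
  constructor
  · apply le_of_sq_le_sq _ (by positivity)
    rw [← Complex.normSq_eq_norm_sq]
    linarith [Complex.normSq_nonneg (B.Y l x)]
  · apply le_of_sq_le_sq _ (by positivity)
    rw [← Complex.normSq_eq_norm_sq]
    linarith [Complex.normSq_nonneg (B.X l x)]

/-- One-sided asymptotics, abstract form. `σ = ± i`. -/
theorem asym_abs (D : Dat) (σ : ℂ) (hσ : σ * σ = -1) (hσn : ‖σ‖ = 1) (hσr : σ.re = 0) (k k' : ℝ → ℂ) (m w : ℝ → ℝ)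
    (hk : ContDiff ℝ 1 k) (hk' : Continuous k') (hm : Continuous m)
    (hw : ∀ x, HasDerivAt w (- m x) x) (hwb : w D.b = 0) (C₀ : ℝ) (hC₀ : 0 ≤ C₀) :
    ∃ C : ℝ, 0 ≤ C ∧ ∀ (l : ℂ) (z v : ℝ → ℂ),
      (∀ x ∈ Icc D.a D.b, HasDerivAt z (-σ * (l * D.r x - m x) * z x + k x * v x) x) →
      (∀ x ∈ Icc D.a D.b, HasDerivAt v (σ * (l * D.r x - m x) * v x + k' x * z x) x) →
      (∀ x ∈ Icc D.a D.b, ‖z x‖ ≤ C₀ * Real.exp (|l.im| * D.S x)) →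
      (∀ x ∈ Icc D.a D.b, ‖v x‖ ≤ C₀ * Real.exp (|l.im| * D.S x)) →
      ∀ x ∈ Icc D.a D.b, ‖l‖ * ‖z x - Complex.exp (σ * (l * D.S x - w x)) * z D.b‖ ≤
        C * Real.exp (|l.im| * D.S x) := by
  have hrne : ∀ x ∈ Icc D.a D.b, (D.r x : ℂ) ≠ 0 := fun x hx => by
    exact_mod_cast (D.rpos x hx).ne'
  set h : ℝ → ℂ := fun x => -σ * k x / (2 * D.r x) with hh
  set h' : ℝ → ℂ := fun x =>
    (-σ * deriv k x * (2 * D.r x) - -σ * k x * (2 * (deriv D.r x : ℝ))) / (2 * D.r x) ^ 2 with hh'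
  have hhd : ∀ x ∈ Icc D.a D.b, HasDerivAt h (h' x) x := by
    intro x hx
    have h1 : HasDerivAt k (deriv k x) x := (hk.differentiable (by norm_num) x).hasDerivAt
    have h2 : HasDerivAt D.r (deriv D.r x) x := (D.hr.differentiable (by norm_num) x).hasDerivAt
    exact (h1.const_mul (-σ)).fun_div (h2.ofReal_comp.const_mul 2)
      (mul_ne_zero two_ne_zero (hrne x hx))
  have hrc : Continuous fun x => (D.r x : ℂ) := Complex.continuous_ofReal.comp D.hr.continuous
  have hdr : Continuous fun x => ((deriv D.r x : ℝ) : ℂ) :=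
    Complex.continuous_ofReal.comp (D.hr.continuous_deriv (by norm_num))
  have hdk : Continuous (deriv k) := hk.continuous_deriv (by norm_num)
  have hkc : Continuous k := hk.continuous
  have hhc : ContinuousOn h (Icc D.a D.b) := fun x hx => (hhd x hx).continuousAt.continuousWithinAt
  have hh'c : ContinuousOn h' (Icc D.a D.b) := by
    apply ContinuousOn.div
    · fun_prop
    · exact ((continuous_const.mul hrc).pow 2).continuousOn
    · intro x hx
      exact pow_ne_zero 2 (mul_ne_zero two_ne_zero (hrne x hx))
  have hmc : Continuous fun x => (m x : ℂ) := Complex.continuous_ofReal.comp hm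
  obtain ⟨K, hK⟩ := isCompact_Icc.exists_bound_of_continuousOn (s := Icc D.a D.b) hhc
  obtain ⟨K₁, hK₁⟩ := isCompact_Icc.exists_bound_of_continuousOn (s := Icc D.a D.b)
    (f := fun x => -h' x + 2 * σ * h x * m x) (by fun_prop)
  obtain ⟨K₂, hK₂⟩ := isCompact_Icc.exists_bound_of_continuousOn (s := Icc D.a D.b)
    (f := fun x => h x * k' x) (by fun_prop)
  have ha := left_mem_Icc.2 D.hab.le
  have hb := right_mem_Icc.2 D.hab.le
  have hK0 : 0 ≤ K := (norm_nonneg _).trans (hK _ ha)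
  have hK10 : 0 ≤ K₁ := (norm_nonneg _).trans (hK₁ _ ha)
  have hK20 : 0 ≤ K₂ := (norm_nonneg _).trans (hK₂ _ ha)
  have hba := sub_nonneg.2 D.hab.le
  refine ⟨2 * K * C₀ + (K₁ + K₂) * C₀ * (D.b - D.a), by positivity, ?_⟩
  intro l z v hz hv hzb hvb x hx
  set P : ℝ → ℂ := fun y => Complex.exp (σ * (l * D.S y - w y)) with hP
  set Q : ℝ → ℂ := fun y => Complex.exp (-(σ * (l * D.S y - w y))) with hQ
  have hPQ : ∀ y, P y * Q y = 1 := fun y => by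
    simp only [hP, hQ, ← Complex.exp_add, add_neg_cancel, Complex.exp_zero]
  have hQd : ∀ y, HasDerivAt Q (σ * (l * D.r y - m y) * Q y) y := by
    intro y
    have h1 := (D.hasDerivAt_S y).ofReal_comp
    have h2 := (hw y).ofReal_comp
    refine ((((h1.const_mul l).fun_sub h2).const_mul σ).fun_neg.cexp).congr_deriv ?_
    simp only [hQ]; push_cast; ring
  set R : ℝ → ℂ := fun y => Q y * (l * z y - h y * v y) with hR
  set R' : ℝ → ℂ := fun y => Q y * ((-h' y + 2 * σ * h y * m y) * v y - h y * k' y * z y) with hR'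
  have hRd : ∀ y ∈ Icc D.a D.b, HasDerivAt R (R' y) y := by
    intro y hy
    refine ((hQd y).fun_mul (((hz y hy).const_mul l).fun_sub ((hhd y hy).fun_mul (hv y hy)))).congr_deriv ?_
    simp only [hR']
    have e : h y * (2 * D.r y) = -σ * k y := by
      simp only [hh]
      field_simp [hrne y hy]
    have : σ * (l * D.r y - m y) * Q y * (l * z y - h y * v y) + Q y * (l * (-σ * (l * D.r y - m y) * z y + k y * v y) -
        (h' y * v y + h y * (σ * (l * D.r y - m y) * v y + k' y * z y))) -
        (Q y * ((-h' y + 2 * σ * h y * m y) * v y - h y * k' y * z y))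
        = Q y * v y * l * (k y  - σ * (h y * (2 * D.r y))) := by ring
    rw [← sub_eq_zero, this, e]
    linear_combination Q y * v y * l * k y * hσ
  have him : ∀ y, ‖Complex.exp (-(σ * (l * D.S y - w y)))‖ = Real.exp (σ.im * l.im * D.S y) := by
    intro y
    rw [Complex.norm_exp]; simp [hσr]; ring
  have him' : ∀ y, ‖P y‖ = Real.exp (-(σ.im * l.im * D.S y)) := by
    intro y
    simp only [hP]
    rw [Complex.norm_exp]; simp [hσr]; ring_nf
  have hsig : |σ.im| = 1 := by
    have := Complex.normSq_eq_norm_sq σ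
    rw [hσn, Complex.normSq_apply, hσr] at this
    rw [← sq_eq_sq₀ (abs_nonneg _) zero_le_one, sq_abs]; nlinarith
  have hsl : |σ.im * l.im| = |l.im| := by rw [abs_mul, hsig, one_mul]
  have hw1 : ∀ y ∈ Icc x D.b, ‖P x‖ * ‖Q y‖ * Real.exp (|l.im| * D.S y) ≤ Real.exp (|l.im| * D.S x) := by
    intro y hy
    have hy' : y ∈ Icc D.a D.b := ⟨hx.1.trans hy.1, hy.2⟩
    have hS := D.S_anti hx hy' hy.1
    rw [him', show ‖Q y‖ = _ from him y, ← Real.exp_add, ← Real.exp_add, Real.exp_le_exp]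
    have := neg_abs_le (σ.im * l.im)
    rw [hsl] at this
    nlinarith
  have hbound : ∀ y ∈ Icc x D.b, ‖P x * R' y‖ ≤ (K₁ + K₂) * C₀ * Real.exp (|l.im| * D.S x) := by
    intro y hy
    have hy' : y ∈ Icc D.a D.b := ⟨hx.1.trans hy.1, hy.2⟩
    have e1 : ‖(-h' y + 2 * σ * h y * m y) * v y - h y * k' y * z y‖ ≤
        (K₁ + K₂) * C₀ * Real.exp (|l.im| * D.S y) := by
      refine (norm_sub_le _ _).trans ?_
      rw [norm_mul, norm_mul (h y * k' y)]
      have := mul_le_mul (hK₁ y hy') (hvb y hy') (norm_nonneg _) hK10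
      have := mul_le_mul (hK₂ y hy') (hzb y hy') (norm_nonneg _) hK20
      linarith
    calc ‖P x * R' y‖ = ‖P x‖ * ‖Q y‖ * ‖(-h' y + 2 * σ * h y * m y) * v y - h y * k' y * z y‖ := by
          simp only [hR', norm_mul]; ring
      _ ≤ ‖P x‖ * ‖Q y‖ * ((K₁ + K₂) * C₀ * Real.exp (|l.im| * D.S y)) := by gcongr
      _ = (K₁ + K₂) * C₀ * (‖P x‖ * ‖Q y‖ * Real.exp (|l.im| * D.S y)) := by ring
      _ ≤ _ := by
        apply mul_le_mul_of_nonneg_left (hw1 y hy)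
        positivity
  have hmv := Convex.norm_image_sub_le_of_norm_hasDerivWithin_le (f := fun y => P x * R y)
    (f' := fun y => P x * R' y) (s := Icc x D.b) (x := x) (y := D.b)
    (C := (K₁ + K₂) * C₀ * Real.exp (|l.im| * D.S x))
    (fun y hy => ((hRd y ⟨hx.1.trans hy.1, hy.2⟩).const_mul (P x)).hasDerivWithinAt) hbound
    (convex_Icc _ _) (left_mem_Icc.2 hx.2) (right_mem_Icc.2 hx.2)
  have hQb : Q D.b = 1 := by simp [hQ, D.S_b, hwb]
  have e2 : l * (z x - P x * z D.b) =
      h x * v x - P x * (h D.b * v D.b) - (P x * R D.b - P x * R x) := by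
    simp only [hR, hQb]
    linear_combination (-(l * z x - h x * v x)) * hPQ x
  have hmv2 : ‖P x * R D.b - P x * R x‖ ≤ (K₁ + K₂) * C₀ * (D.b - D.a) * Real.exp (|l.im| * D.S x) := by
    refine hmv.trans ?_
    rw [Real.norm_of_nonneg (sub_nonneg.2 hx.2)]
    have : D.b - x ≤ D.b - D.a := by linarith [hx.1]
    calc _ ≤ (K₁ + K₂) * C₀ * Real.exp (|l.im| * D.S x) * (D.b - D.a) := by gcongr
      _ = _ := by ring
  have e3 : ‖h x * v x‖ ≤ K * C₀ * Real.exp (|l.im| * D.S x) := by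
    rw [norm_mul, mul_assoc]
    exact mul_le_mul (hK x hx) (hvb x hx) (norm_nonneg _) hK0
  have e4 : ‖P x * (h D.b * v D.b)‖ ≤ K * C₀ * Real.exp (|l.im| * D.S x) := by
    have f1 := hw1 D.b (right_mem_Icc.2 hx.2)
    rw [hQb, D.S_b] at f1
    have f2 : ‖h D.b * v D.b‖ ≤ K * C₀ := by
      have := hvb D.b hb
      rw [D.S_b] at this
      simp at this
      rw [norm_mul]
      exact mul_le_mul (hK _ hb) this (norm_nonneg _) hK0
    simp at f1
    rw [norm_mul, mul_comm (K * C₀)]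
    exact mul_le_mul f1 f2 (norm_nonneg _) (Real.exp_pos _).le
  rw [← norm_mul]
  show ‖l * (z x - P x * z D.b)‖ ≤ _
  rw [e2]
  have := norm_sub_le (h x * v x - P x * (h D.b * v D.b)) (P x * R D.b - P x * R x)
  have := norm_sub_le (h x * v x) (P x * (h D.b * v D.b))
  linarith

end DiracAux

namespace DiracAux
open Set Filter Topology MeasureTheory

variable (B : Bun)

/-- phase correction -/
noncomputable def Bun.w (x : ℝ) : ℝ := ∫ s in x..B.b, (B.p s + B.q s) / 2

theorem Bun.hasDerivAt_w (x : ℝ) : HasDerivAt B.w (-((B.p x + B.q x) / 2)) x := by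
  have h : Continuous (fun s => (B.p s + B.q s) / 2) := (B.hp.continuous.add B.hq.continuous).div_const 2
  exact intervalIntegral.integral_hasDerivAt_left (h.intervalIntegrable _ _)
    (h.stronglyMeasurableAtFilter _ _) h.continuousAt

theorem Bun.asym : ∃ C : ℝ, 0 ≤ C ∧ ∀ l, ∀ x ∈ Icc B.a B.b,
    ‖l‖ * ‖(B.X l x + Complex.I * B.Y l x) - Complex.exp (Complex.I * (l * B.S x - B.w x)) *
      (Real.sin B.β - Complex.I * Real.cos B.β)‖ ≤ C * Real.exp (|l.im| * B.S x) ∧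
    ‖l‖ * ‖(B.X l x - Complex.I * B.Y l x) - Complex.exp (-Complex.I * (l * B.S x - B.w x)) *
      (Real.sin B.β + Complex.I * Real.cos B.β)‖ ≤ C * Real.exp (|l.im| * B.S x) := by
  obtain ⟨C₀, hC₀, hC⟩ := B.bound
  have hm : Continuous (fun s => (B.p s + B.q s) / 2) := (B.hp.continuous.add B.hq.continuous).div_const 2
  have hwb : B.w B.b = 0 := by simp [Bun.w]
  have cr : ∀ {f : ℝ → ℝ}, ContDiff ℝ 1 f → ContDiff ℝ 1 (fun x => (f x : ℂ)) := fun h =>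
    Complex.ofRealCLM.contDiff.comp h
  have hk1 : ContDiff ℝ 1 (fun x => -(B.t x : ℂ) + Complex.I * ((B.p x - B.q x) / 2)) :=
    (cr B.ht).neg.add (contDiff_const.mul (((cr B.hp).sub (cr B.hq)).div_const 2))
  have hk2 : ContDiff ℝ 1 (fun x => -(B.t x : ℂ) - Complex.I * ((B.p x - B.q x) / 2)) :=
    (cr B.ht).neg.sub (contDiff_const.mul (((cr B.hp).sub (cr B.hq)).div_const 2))
  obtain ⟨C1, h10, h1⟩ := asym_abs B.toDat Complex.I (by simp) (by simp) (by simp) _ _ _ _ hk1 hk2.continuous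
    hm B.hasDerivAt_w hwb (2 * C₀) (by positivity)
  obtain ⟨C2, h20, h2⟩ := asym_abs B.toDat (-Complex.I) (by simp) (by simp) (by simp) _ _ _ _ hk2 hk1.continuous
    hm B.hasDerivAt_w hwb (2 * C₀) (by positivity)
  have hzp : ∀ l, ∀ x ∈ Icc B.a B.b, HasDerivAt (fun x => B.X l x + Complex.I * B.Y l x)
      (-Complex.I * (l * B.r x - ((B.p x + B.q x) / 2 : ℝ)) * (B.X l x + Complex.I * B.Y l x) +
        (-(B.t x : ℂ) + Complex.I * ((B.p x - B.q x) / 2)) * (B.X l x - Complex.I * B.Y l x)) x := by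
    intro l x hx
    refine ((B.hX l x hx).fun_add ((B.hY l x hx).const_mul Complex.I)).congr_deriv ?_
    push_cast
    linear_combination (B.Y l x * (l * B.r x - (B.p x + B.q x) / 2) + B.Y l x * (B.p x - B.q x) / 2) * Complex.I_sq
  have hzm : ∀ l, ∀ x ∈ Icc B.a B.b, HasDerivAt (fun x => B.X l x - Complex.I * B.Y l x)
      (Complex.I * (l * B.r x - ((B.p x + B.q x) / 2 : ℝ)) * (B.X l x - Complex.I * B.Y l x) +
        (-(B.t x : ℂ) - Complex.I * ((B.p x - B.q x) / 2)) * (B.X l x + Complex.I * B.Y l x)) x := by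
    intro l x hx
    refine ((B.hX l x hx).fun_sub ((B.hY l x hx).const_mul Complex.I)).congr_deriv ?_
    push_cast
    linear_combination (B.Y l x * (l * B.r x - (B.p x + B.q x) / 2) + B.Y l x * (B.p x - B.q x) / 2) * Complex.I_sq
  have hbp : ∀ l, ∀ x ∈ Icc B.a B.b, ‖B.X l x + Complex.I * B.Y l x‖ ≤ 2 * C₀ * Real.exp (|l.im| * B.S x) := by
    intro l x hx
    have := norm_add_le (B.X l x) (Complex.I * B.Y l x)
    rw [norm_mul, Complex.norm_I] at this
    linarith [hC l x hx]
  have hbm : ∀ l, ∀ x ∈ Icc B.a B.b, ‖B.X l x - Complex.I * B.Y l x‖ ≤ 2 * C₀ * Real.exp (|l.im| * B.S x) := by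
    intro l x hx
    have := norm_sub_le (B.X l x) (Complex.I * B.Y l x)
    rw [norm_mul, Complex.norm_I] at this
    linarith [hC l x hx]
  refine ⟨C1 + C2, by positivity, fun l x hx => ⟨?_, ?_⟩⟩
  · have := h1 l _ _ (hzp l) (hzm l) (hbp l) (hbm l) x hx
    simp only [B.hXb, B.hYb] at this
    rw [show (Real.sin B.β - Complex.I * Real.cos B.β : ℂ) = Real.sin B.β + Complex.I * (-Real.cos B.β) by ring]
    refine this.trans ?_
    gcongr; linarith
  · have := h2 l _ _ (fun x hx => by simpa using hzm l x hx) (hzp l) (hbm l) (hbp l) x hx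
    simp only [B.hXb, B.hYb] at this
    rw [show (Real.sin B.β + Complex.I * Real.cos B.β : ℂ) = Real.sin B.β - Complex.I * (-Real.cos B.β) by ring]
    refine this.trans ?_
    gcongr; linarith

/-- characteristic function -/
noncomputable def Bun.om (l : ℂ) : ℂ := B.X l B.a * Real.cos B.α + B.Y l B.a * Real.sin B.α
/-- conjugate boundary value -/
noncomputable def Bun.eta (l : ℂ) : ℂ := B.X l B.a * Real.sin B.α - B.Y l B.a * Real.cos B.α
/-- total length -/
noncomputable def Bun.len : ℝ := B.S B.a
/-- phase constant -/
noncomputable def Bun.c : ℝ := B.β - B.α - B.w B.a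

theorem Bun.len_pos : 0 < B.len := by
  apply intervalIntegral.intervalIntegral_pos_of_pos_on
  · exact B.hr.continuous.intervalIntegrable _ _
  · exact fun x hx => B.rpos x ⟨hx.1.le, hx.2.le⟩
  · exact B.hab

theorem Bun.om_diff : Differentiable ℂ B.om := (B.hdX.mul_const _).add (B.hdY.mul_const _)
theorem Bun.eta_diff : Differentiable ℂ B.eta := (B.hdX.mul_const _).sub (B.hdY.mul_const _)

theorem Bun.om_asym : ∃ C : ℝ, 0 ≤ C ∧ ∀ l,
    ‖l‖ * ‖B.om l - Complex.sin (l * B.len + B.c)‖ ≤ C * Real.exp (|l.im| * B.len) ∧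
    ‖l‖ * ‖B.eta l + Complex.I * B.om l‖ ≤ ‖l‖ * Real.exp (-(l.im * B.len)) + C * Real.exp (|l.im| * B.len) ∧
    ‖l‖ * ‖B.eta l - Complex.I * B.om l‖ ≤ ‖l‖ * Real.exp (l.im * B.len) + C * Real.exp (|l.im| * B.len) := by
  obtain ⟨C, hC0, hC⟩ := B.asym
  refine ⟨C, hC0, fun l => ?_⟩
  obtain ⟨h1, h2⟩ := hC l B.a (left_mem_Icc.2 B.hab.le)
  rw [show B.S B.a = B.len from rfl] at h1 h2
  set E := C * Real.exp (|l.im| * B.len) with hE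
  set zp := B.X l B.a + Complex.I * B.Y l B.a with hzp
  set zm := B.X l B.a - Complex.I * B.Y l B.a with hzm
  have b1 : (Real.sin B.β - Complex.I * Real.cos B.β : ℂ) = -Complex.I * Complex.exp (Complex.I * B.β) := by
    rw [mul_comm Complex.I (B.β : ℂ), Complex.exp_mul_I]; push_cast
    linear_combination (Complex.sin B.β) * Complex.I_sq
  have b2 : (Real.sin B.β + Complex.I * Real.cos B.β : ℂ) = Complex.I * Complex.exp (-Complex.I * B.β) := by
    rw [show -Complex.I * (B.β : ℂ) = (-B.β : ℂ) * Complex.I by ring, Complex.exp_mul_I, Complex.cos_neg, Complex.sin_neg]; push_cast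
    linear_combination (Complex.sin B.β) * Complex.I_sq
  have a1 : Complex.exp (-Complex.I * B.α) = Real.cos B.α - Complex.I * Real.sin B.α := by
    rw [show -Complex.I * (B.α : ℂ) = (-B.α : ℂ) * Complex.I by ring, Complex.exp_mul_I, Complex.cos_neg, Complex.sin_neg]; push_cast
    ring
  have a2 : Complex.exp (Complex.I * B.α) = Real.cos B.α + Complex.I * Real.sin B.α := by
    rw [show Complex.I * (B.α : ℂ) = (B.α : ℂ) * Complex.I by ring, Complex.exp_mul_I]; push_cast
    ring
  have na1 : ‖Complex.exp (-Complex.I * B.α)‖ = 1 := by simp [Complex.norm_exp]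
  have na2 : ‖Complex.exp (Complex.I * B.α)‖ = 1 := by simp [Complex.norm_exp]
  have nb1 : ‖(Real.sin B.β - Complex.I * Real.cos B.β : ℂ)‖ = 1 := by
    rw [b1, norm_mul]; simp [Complex.norm_exp]
  have nb2 : ‖(Real.sin B.β + Complex.I * Real.cos B.β : ℂ)‖ = 1 := by
    rw [b2, norm_mul]; simp [Complex.norm_exp]
  have ne1 : ‖Complex.exp (Complex.I * (l * B.len - B.w B.a))‖ = Real.exp (-(l.im * B.len)) := by
    simp [Complex.norm_exp]
  have ne2 : ‖Complex.exp (-Complex.I * (l * B.len - B.w B.a))‖ = Real.exp (l.im * B.len) := by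
    simp [Complex.norm_exp]
  refine ⟨?_, ?_, ?_⟩
  · have e : B.om l - Complex.sin (l * B.len + B.c) =
        Complex.exp (-Complex.I * B.α) / 2 * (zp - Complex.exp (Complex.I * (l * B.len - B.w B.a)) *
      (Real.sin B.β - Complex.I * Real.cos B.β)) +
        Complex.exp (Complex.I * B.α) / 2 * (zm - Complex.exp (-Complex.I * (l * B.len - B.w B.a)) *
      (Real.sin B.β + Complex.I * Real.cos B.β)) := by
      have s1 : Complex.exp (-((l * B.len + B.c) * Complex.I)) =
          Complex.exp (Complex.I * B.α) * Complex.exp (-Complex.I * (l * B.len - B.w B.a)) * Complex.exp (-Complex.I * B.β) := by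
        rw [← Complex.exp_add, ← Complex.exp_add]; congr 1; simp only [Bun.c]; push_cast; ring
      have s2 : Complex.exp (((l * B.len + B.c) * Complex.I)) =
          Complex.exp (-Complex.I * B.α) * Complex.exp (Complex.I * (l * B.len - B.w B.a)) * Complex.exp (Complex.I * B.β) := by
        rw [← Complex.exp_add, ← Complex.exp_add]; congr 1; simp only [Bun.c]; push_cast; ring
      rw [Complex.sin, neg_mul, s1, s2, b1, b2]
      have : B.om l = Complex.exp (-Complex.I * B.α) / 2 * zp + Complex.exp (Complex.I * B.α) / 2 * zm := by
        rw [a1, a2]; simp only [Bun.om, hzp, hzm]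
        linear_combination (B.Y l B.a * Real.sin B.α) * Complex.I_sq
      rw [this]; ring
    rw [e]
    have := norm_add_le (Complex.exp (-Complex.I * B.α) / 2 * (zp - Complex.exp (Complex.I * (l * B.len - B.w B.a)) *
      (Real.sin B.β - Complex.I * Real.cos B.β))) (
        Complex.exp (Complex.I * B.α) / 2 * (zm - Complex.exp (-Complex.I * (l * B.len - B.w B.a)) *
      (Real.sin B.β + Complex.I * Real.cos B.β)))
    rw [norm_mul, norm_mul, norm_div, norm_div, na1, na2, Complex.norm_two] at this
    refine (mul_le_mul_of_nonneg_left this (norm_nonneg l)).trans ?_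
    linarith
  · have e : B.eta l + Complex.I * B.om l = Complex.I * Complex.exp (-Complex.I * B.α) * zp := by
      rw [a1]; simp only [Bun.om, Bun.eta, hzp]
      linear_combination (B.X l B.a * Real.sin B.α - B.Y l B.a * Real.cos B.α +
        Complex.I * B.Y l B.a * Real.sin B.α) * Complex.I_sq
    rw [e, norm_mul, norm_mul, na1, Complex.norm_I, one_mul, one_mul]
    have := norm_sub_norm_le zp (Complex.exp (Complex.I * (l * B.len - B.w B.a)) *
      (Real.sin B.β - Complex.I * Real.cos B.β))
    rw [norm_mul, nb1, ne1] at this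
    have := mul_le_mul_of_nonneg_left this (norm_nonneg l)
    linarith
  · have e : B.eta l - Complex.I * B.om l = -Complex.I * Complex.exp (Complex.I * B.α) * zm := by
      rw [a2]; simp only [Bun.om, Bun.eta, hzm]
      linear_combination (B.X l B.a * Real.sin B.α - B.Y l B.a * Real.cos B.α -
        Complex.I * B.Y l B.a * Real.sin B.α) * Complex.I_sq
    rw [e, norm_mul, norm_mul, na2, norm_neg, Complex.norm_I, one_mul, one_mul]
    have := norm_sub_norm_le zm (Complex.exp (-Complex.I * (l * B.len - B.w B.a)) *
      (Real.sin B.β + Complex.I * Real.cos B.β))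
    rw [norm_mul, nb2, ne2] at this
    have := mul_le_mul_of_nonneg_left this (norm_nonneg l)
    linarith

theorem Bun.lagrange (l l' : ℂ) : (l - l') * ∫ x in B.a..B.b, B.r x * (B.X l x * B.X l' x + B.Y l x * B.Y l' x) =
    B.om l * B.eta l' - B.eta l * B.om l' := by
  have hc1 := B.hXc l
  have hc2 := B.hXc l'
  have hc3 := B.hYc l
  have hc4 := B.hYc l'
  have hc5 : Continuous fun x => (B.r x : ℂ) := Complex.continuous_ofReal.comp B.hr.continuous
  have := intervalIntegral.integral_eq_sub_of_hasDerivAt (a := B.a) (b := B.b)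
    (f := fun x => B.X l x * B.Y l' x - B.Y l x * B.X l' x)
    (f' := fun x => (l - l') * (B.r x * (B.X l x * B.X l' x + B.Y l x * B.Y l' x)))
    (fun x hx => by
      rw [uIcc_of_le B.hab.le] at hx
      refine (((B.hX l x hx).fun_mul (B.hY l' x hx)).fun_sub
        ((B.hY l x hx).fun_mul (B.hX l' x hx))).congr_deriv ?_
      ring) (Continuous.intervalIntegrable (by fun_prop) _ _)
  rw [intervalIntegral.integral_const_mul] at this
  rw [this, B.hXb, B.hXb, B.hYb, B.hYb]
  have h1 : (Real.sin B.α : ℂ) ^ 2 + (Real.cos B.α : ℂ) ^ 2 = 1 := by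
    exact_mod_cast Real.sin_sq_add_cos_sq B.α
  simp only [Bun.om, Bun.eta]
  linear_combination (B.X l B.a * B.Y l' B.a - B.Y l B.a * B.X l' B.a) * h1

/-- the numerator -/
noncomputable def Bun.num (F G : ℝ → ℝ) (l : ℂ) : ℂ :=
  ∫ x in B.a..B.b, B.r x * (B.X l x * F x + B.Y l x * G x)

/-- remainder after one integration by parts -/
noncomputable def Bun.rem (F G : ℝ → ℝ) (l : ℂ) : ℂ :=
  ∫ x in B.a..B.b, (B.X l x * (B.p x * F x + B.t x * G x - (deriv G x : ℝ)) +
    B.Y l x * (B.t x * F x + B.q x * G x + (deriv F x : ℝ)))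

theorem Bun.num_diff {F G : ℝ → ℝ} (hF : Continuous F) (hG : Continuous G) : Differentiable ℂ (B.num F G) := by
  have hc5 := B.hr.continuous
  have := B.hdN (fun x => B.r x * F x) (fun x => B.r x * G x) (by fun_prop) (by fun_prop)
  convert this using 1
  ext l
  simp only [Bun.num]
  congr 1; ext x; ring

theorem Bun.parts {F G : ℝ → ℝ} (hF : ContDiff ℝ 1 F) (hG : ContDiff ℝ 1 G) (l : ℂ) :
    l * B.num F G l = (G B.b * Real.sin B.β + F B.b * Real.cos B.β) +
      (B.om l * (F B.a * Real.sin B.α - G B.a * Real.cos B.α) -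
       B.eta l * (F B.a * Real.cos B.α + G B.a * Real.sin B.α)) + B.rem F G l := by
  have hc1 := B.hXc l
  have hc3 := B.hYc l
  have hc5 := B.hr.continuous
  have hc6 := B.hp.continuous
  have hc7 := B.hq.continuous
  have hc8 := B.ht.continuous
  have hF' := hF.continuous_deriv (by norm_num)
  have hG' := hG.continuous_deriv (by norm_num)
  have hF0 := hF.continuous
  have hG0 := hG.continuous
  have := intervalIntegral.integral_eq_sub_of_hasDerivAt (a := B.a) (b := B.b)
    (f := fun x => B.X l x * G x - B.Y l x * F x)
    (f' := fun x => l * (B.r x * (B.X l x * F x + B.Y l x * G x)) -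
      (B.X l x * (B.p x * F x + B.t x * G x - (deriv G x : ℝ)) +
    B.Y l x * (B.t x * F x + B.q x * G x + (deriv F x : ℝ))))
    (fun x hx => by
      rw [uIcc_of_le B.hab.le] at hx
      have h1 := ((hF.differentiable (by norm_num) x).hasDerivAt).ofReal_comp
      have h2 := ((hG.differentiable (by norm_num) x).hasDerivAt).ofReal_comp
      refine (((B.hX l x hx).fun_mul h2).fun_sub
        ((B.hY l x hx).fun_mul h1)).congr_deriv ?_
      ring) (Continuous.intervalIntegrable (by fun_prop) _ _)
  rw [intervalIntegral.integral_sub (Continuous.intervalIntegrable (by fun_prop) _ _) (Continuous.intervalIntegrable (by fun_prop) _ _), intervalIntegral.integral_const_mul] at this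
  change l * B.num F G l - B.rem F G l = _ at this
  rw [sub_eq_iff_eq_add.1 this, B.hXb, B.hYb]
  have h1 : (Real.sin B.α : ℂ) ^ 2 + (Real.cos B.α : ℂ) ^ 2 = 1 := by
    exact_mod_cast Real.sin_sq_add_cos_sq B.α
  simp only [Bun.om, Bun.eta]
  linear_combination (B.X l B.a * G B.a - B.Y l B.a * F B.a) * h1

theorem Bun.rem_bound {F G : ℝ → ℝ} (hF : ContDiff ℝ 1 F) (hG : ContDiff ℝ 1 G) : ∃ C : ℝ, 0 ≤ C ∧ ∀ l,
    ‖B.rem F G l‖ ≤ C * Real.exp (|l.im| * B.len) ∧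
    |l.im| * ‖B.rem F G l‖ ≤ C * Real.exp (|l.im| * B.len) := by
  have hc5 := B.hr.continuous
  have hc6 := B.hp.continuous
  have hc7 := B.hq.continuous
  have hc8 := B.ht.continuous
  have hF' := hF.continuous_deriv (by norm_num)
  have hG' := hG.continuous_deriv (by norm_num)
  have hF0 := hF.continuous
  have hG0 := hG.continuous
  obtain ⟨C, hC0, hC⟩ := B.bound
  obtain ⟨K₁, hK₁⟩ := isCompact_Icc.exists_bound_of_continuousOn (s := Icc B.a B.b)
    (f := fun x => (B.p x * F x + B.t x * G x - (deriv G x : ℝ) : ℂ)) (Continuous.continuousOn (by fun_prop))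
  obtain ⟨K₂, hK₂⟩ := isCompact_Icc.exists_bound_of_continuousOn (s := Icc B.a B.b)
    (f := fun x => (B.t x * F x + B.q x * G x + (deriv F x : ℝ) : ℂ)) (Continuous.continuousOn (by fun_prop))
  have ha := left_mem_Icc.2 B.hab.le
  have hK10 : 0 ≤ K₁ := (norm_nonneg _).trans (hK₁ _ ha)
  have hK20 : 0 ≤ K₂ := (norm_nonneg _).trans (hK₂ _ ha)
  obtain ⟨x0, hx0, hr0⟩ := isCompact_Icc.exists_isMinOn (nonempty_Icc.2 B.hab.le) hc5.continuousOn (s := Icc B.a B.b)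
  have hr0p := B.rpos x0 hx0
  set K := (K₁ + K₂) * C with hK
  have hKn : 0 ≤ K := by positivity
  have hSc : Continuous B.S := continuous_iff_continuousAt.2 fun x => (B.hasDerivAt_S x).continuousAt
  have hpt : ∀ l, ∀ x ∈ Icc B.a B.b, ‖B.X l x * (B.p x * F x + B.t x * G x - (deriv G x : ℝ)) +
    B.Y l x * (B.t x * F x + B.q x * G x + (deriv F x : ℝ))‖ ≤ K * Real.exp (|l.im| * B.S x) := by
    intro l x hx
    refine (norm_add_le _ _).trans ?_
    rw [norm_mul, norm_mul]
    have h1 := mul_le_mul (hC l x hx).1 (hK₁ x hx) (norm_nonneg _) (by positivity)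
    have h2 := mul_le_mul (hC l x hx).2 (hK₂ x hx) (norm_nonneg _) (by positivity)
    rw [hK]; linarith
  refine ⟨K * (B.b - B.a) + K / B.r x0, by have := sub_nonneg.2 B.hab.le; positivity, fun l => ?_⟩
  have hexp := Real.exp_pos (|l.im| * B.len)
  have hab := sub_nonneg.2 B.hab.le
  constructor
  · have := intervalIntegral.norm_integral_le_of_norm_le_const (a := B.a) (b := B.b)
      (f := fun x => B.X l x * (B.p x * F x + B.t x * G x - (deriv G x : ℝ)) +
    B.Y l x * (B.t x * F x + B.q x * G x + (deriv F x : ℝ))) (C := K * Real.exp (|l.im| * B.len))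
      (fun x hx => by
        rw [uIoc_of_le B.hab.le] at hx
        have hx' : x ∈ Icc B.a B.b := ⟨hx.1.le, hx.2⟩
        refine (hpt l x hx').trans ?_
        have : B.S x ≤ B.len := B.S_anti ha hx' hx'.1
        gcongr)
    rw [abs_of_nonneg hab] at this
    change ‖B.rem F G l‖ ≤ _ at this
    have h3 : 0 ≤ K / B.r x0 * Real.exp (|l.im| * B.len) := by positivity
    linarith
  · have h1 : ‖B.rem F G l‖ ≤ ∫ x in B.a..B.b, K / B.r x0 * (B.r x * Real.exp (|l.im| * B.S x)) := by
      apply intervalIntegral.norm_integral_le_of_norm_le B.hab.le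
      · refine Filter.Eventually.of_forall fun x hx => ?_
        have hx' : x ∈ Icc B.a B.b := ⟨hx.1.le, hx.2⟩
        refine (hpt l x hx').trans ?_
        have : B.r x0 ≤ B.r x := hr0 hx'
        have h4 : 1 ≤ B.r x / B.r x0 := by rwa [one_le_div hr0p]
        calc _ ≤ K * Real.exp (|l.im| * B.S x) * (B.r x / B.r x0) := le_mul_of_one_le_right (by positivity) h4
          _ = _ := by ring
      · exact Continuous.intervalIntegrable (by fun_prop) _ _
    have h2 := intervalIntegral.integral_eq_sub_of_hasDerivAt (a := B.a) (b := B.b)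
      (f := fun x => - (K / B.r x0) * Real.exp (|l.im| * B.S x))
      (f' := fun x => |l.im| * (K / B.r x0 * (B.r x * Real.exp (|l.im| * B.S x))))
      (fun x hx => by
        refine ((((B.hasDerivAt_S x).const_mul |l.im|).exp).const_mul (- (K / B.r x0))).congr_deriv ?_
        ring) (Continuous.intervalIntegrable (by fun_prop) _ _)
    rw [intervalIntegral.integral_const_mul, B.S_b] at h2
    have h3 := mul_le_mul_of_nonneg_left h1 (abs_nonneg l.im)
    rw [h2] at h3
    refine h3.trans ?_
    have h5 : 0 ≤ K / B.r x0 := by positivity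
    have h6 : 0 ≤ K * (B.b - B.a) * Real.exp (|l.im| * B.len) := by positivity
    simp only [Bun.len] at *
    simp
    linarith

theorem Bun.pos (l : ℂ) : 0 < ∫ x in B.a..B.b, B.r x * (Complex.normSq (B.X l x) + Complex.normSq (B.Y l x)) := by
  have hc1 := B.hXc l
  have hc3 := B.hYc l
  have hc5 := B.hr.continuous
  have hn := Complex.continuous_normSq
  apply intervalIntegral.integral_pos B.hab (Continuous.continuousOn (by fun_prop))
  · intro x hx
    exact mul_nonneg (B.rpos x ⟨hx.1.le, hx.2⟩).le (add_nonneg (Complex.normSq_nonneg _) (Complex.normSq_nonneg _))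
  · have hb := right_mem_Icc.2 B.hab.le
    refine ⟨B.b, hb, mul_pos (B.rpos _ hb) ?_⟩
    rw [B.hXb, B.hYb, Complex.normSq_neg, Complex.normSq_ofReal, Complex.normSq_ofReal]
    have := Real.sin_sq_add_cos_sq B.β
    nlinarith

theorem Bun.om_conj (l : ℂ) : B.om ((starRingEnd ℂ) l) = (starRingEnd ℂ) (B.om l) := by
  have := B.conj_eq l (left_mem_Icc.2 B.hab.le)
  simp only [Bun.om, this.1, this.2, map_add, map_mul, Complex.conj_ofReal]

theorem Bun.eta_conj (l : ℂ) : B.eta ((starRingEnd ℂ) l) = (starRingEnd ℂ) (B.eta l) := by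
  have := B.conj_eq l (left_mem_Icc.2 B.hab.le)
  simp only [Bun.eta, this.1, this.2, map_sub, map_mul, Complex.conj_ofReal]

theorem Bun.real_of_zero {l : ℂ} (h : B.om l = 0) : l.im = 0 := by
  have h1 := B.lagrange l ((starRingEnd ℂ) l)
  rw [B.om_conj, h, map_zero, zero_mul, mul_zero, sub_zero] at h1
  have h2 : (∫ x in B.a..B.b, B.r x * (B.X l x * B.X ((starRingEnd ℂ) l) x + B.Y l x * B.Y ((starRingEnd ℂ) l) x)) =
     ((∫ x in B.a..B.b, B.r x * (Complex.normSq (B.X l x) + Complex.normSq (B.Y l x)) : ℝ) : ℂ) := by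
    rw [← intervalIntegral.integral_ofReal]
    apply intervalIntegral.integral_congr
    intro x hx
    rw [uIcc_of_le B.hab.le] at hx
    have := B.conj_eq l hx
    simp only [this.1, this.2, Complex.mul_conj]
    push_cast
    ring
  rw [h2] at h1
  rcases mul_eq_zero.1 h1 with h3 | h3
  · have := congrArg Complex.im h3
    simp at this
    linarith
  · have := B.pos l
    rw [Complex.ofReal_eq_zero] at h3
    exact absurd h3 this.ne'

end DiracAux

namespace DiracAux
open Set Filter Topology MeasureTheory


theorem residue (S : Finset ℂ) (c : ℂ) (R : ℝ) (res : ℂ → ℂ) (hS : ∀ s ∈ S, s ∈ Metric.ball c R) (hR : 0 < R) :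
    ∀ G : ℂ → ℂ, (∀ z ∈ Metric.closedBall c R, z ∉ S → DifferentiableAt ℂ G z) →
    (∀ s ∈ S, Tendsto (fun z => (z - s) * G z) (𝓝[≠] s) (𝓝 (res s))) →
    (∮ z in C(c, R), G z) = 2 * Real.pi * Complex.I * ∑ s ∈ S, res s := by
  induction S using Finset.induction_on with
  | empty =>
    intro G hd _
    simp only [Finset.sum_empty, mul_zero]
    apply Complex.circleIntegral_eq_zero_of_differentiable_on_off_countable hR.le countable_empty
    · exact fun z hz => (hd z hz (by simp)).continuousAt.continuousWithinAt
    · exact fun z hz => hd z (Metric.ball_subset_closedBall hz.1) (by simp)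
  | insert s S hs ih =>
    intro G hd hr
    have hsb := hS s (Finset.mem_insert_self _ _)
    have hsphere : ∀ z ∈ Metric.sphere c R, z ∉ insert s S := fun z hz h => by
      have := hS z h
      rw [Metric.mem_ball] at this
      rw [Metric.mem_sphere] at hz
      linarith
    set G1 : ℂ → ℂ := fun z => G z - res s * (z - s)⁻¹ with hG1
    set G2 := Function.update G1 s (limUnder (𝓝[≠] s) G1) with hG2
    have hd1 : ∀ z ∈ Metric.closedBall c R, z ∉ insert s S → DifferentiableAt ℂ G1 z := by
      intro z hz hzs
      have hne : z - s ≠ 0 := sub_ne_zero.2 fun h => hzs (h ▸ Finset.mem_insert_self _ _)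
      exact (hd z hz hzs).sub (((differentiableAt_id.sub_const s).inv hne).const_mul _)
    have hupd : ∀ z, z ≠ s → G2 =ᶠ[𝓝 z] G1 := fun z hz => by
      filter_upwards [isOpen_ne.mem_nhds hz] with y hy
      exact Function.update_of_ne hy _ _
    -- punctured neighbourhood
    have hnear : (Metric.ball c R \ (S : Set ℂ)) ∈ 𝓝 s := by
      apply (Metric.isOpen_ball.sdiff S.finite_toSet.isClosed).mem_nhds
      exact ⟨hsb, by simpa using hs⟩
    have hlo : (fun z => G1 z - G1 s) =o[𝓝[≠] s] fun z => (z - s)⁻¹ := by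
      rw [Asymptotics.isLittleO_iff_tendsto']
      · have h1 : Tendsto (fun z => (z - s) * G z - res s - (z - s) * G1 s) (𝓝[≠] s) (𝓝 0) := by
          have h2 : Tendsto (fun z : ℂ => (z - s) * G1 s) (𝓝[≠] s) (𝓝 0) := by
            have : Continuous fun z : ℂ => (z - s) * G1 s := by fun_prop
            have := this.tendsto s
            simp only [sub_self, zero_mul] at this
            exact this.mono_left nhdsWithin_le_nhds
          have := ((hr s (Finset.mem_insert_self _ _)).sub_const (res s)).sub h2
          simpa using this
        refine h1.congr' ?_
        filter_upwards [self_mem_nhdsWithin] with z hz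
        have hz' : z - s ≠ 0 := sub_ne_zero.2 hz
        simp only [hG1]
        field_simp
      · filter_upwards [self_mem_nhdsWithin] with z hz h
        exact absurd h (inv_ne_zero (sub_ne_zero.2 hz))
    have hds : DifferentiableAt ℂ G2 s := by
      have := Complex.differentiableOn_update_limUnder_of_isLittleO hnear (f := G1) (fun z hz => by
        refine (hd1 z (Metric.ball_subset_closedBall hz.1.1) ?_).differentiableWithinAt
        simp only [Finset.mem_insert, not_or]
        exact ⟨hz.2, hz.1.2⟩) hlo
      exact this.differentiableAt hnear
    have hI := ih (fun s hs => hS s (Finset.mem_insert_of_mem hs)) G2 (fun z hz hzS => by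
        by_cases h : z = s
        · rw [h]; exact hds
        · exact (hd1 z hz (by simp [h, hzS])).congr_of_eventuallyEq (hupd z h)) (fun u hu => by
        have hus : u ≠ s := fun h => hs (h ▸ hu)
        have h1 := hr u (Finset.mem_insert_of_mem hu)
        have h2 : Tendsto (fun z => (z - u) * (res s * (z - s)⁻¹)) (𝓝[≠] u) (𝓝 0) := by
          have hc : ContinuousAt (fun z => (z - u) * (res s * (z - s)⁻¹)) u := by
            apply ContinuousAt.mul (by fun_prop)
            exact ContinuousAt.mul (by fun_prop) (ContinuousAt.inv₀ (by fun_prop) (sub_ne_zero.2 hus))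
          have := hc.tendsto
          simp only [sub_self, zero_mul] at this
          exact this.mono_left nhdsWithin_le_nhds
        have h3 := h1.sub h2
        rw [sub_zero] at h3
        refine h3.congr' ?_
        filter_upwards [(hupd u hus).filter_mono nhdsWithin_le_nhds] with z hz
        rw [hz]; simp only [hG1]; ring)
    have hc1 : (∮ z in C(c, R), G2 z) = ∮ z in C(c, R), (G z - res s * (z - s)⁻¹) := by
      apply circleIntegral.integral_congr hR.le
      intro z hz
      have hne : z ≠ s := fun h => hsphere z hz (h ▸ Finset.mem_insert_self _ _)
      exact Function.update_of_ne hne _ _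
    have hi1 : CircleIntegrable G c R := by
      apply ContinuousOn.circleIntegrable hR.le
      exact fun z hz => (hd z (Metric.sphere_subset_closedBall hz) (hsphere z hz)).continuousAt.continuousWithinAt
    have hi2 : CircleIntegrable (fun z => res s * (z - s)⁻¹) c R := by
      apply ContinuousOn.circleIntegrable hR.le
      apply ContinuousOn.mul continuousOn_const
      exact ContinuousOn.inv₀ (by fun_prop) (fun z hz =>
        sub_ne_zero.2 fun h => hsphere z hz (h ▸ Finset.mem_insert_self _ _))
    rw [hc1, circleIntegral.integral_sub hi1 hi2, circleIntegral.integral_const_mul,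
      circleIntegral.integral_sub_inv_of_mem_ball hsb] at hI
    rw [Finset.sum_insert hs]
    linear_combination hI

theorem sin_lower (k : ℕ) (z : ℂ) (hz : ‖z‖ = (k + 1 / 2) * Real.pi) :
    Real.exp |z.im| ≤ 8 * ‖Complex.sin z‖ := by
  have hsq : ‖Complex.sin z‖ ^ 2 = Real.sin z.re ^ 2 + Real.sinh z.im ^ 2 := by
    rw [← Complex.normSq_eq_norm_sq]
    conv_lhs => rw [← Complex.re_add_im z]
    rw [Complex.sin_add_mul_I, ← Complex.ofReal_sin, ← Complex.ofReal_cos, ← Complex.ofReal_sinh, ← Complex.ofReal_cosh,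
      ← Complex.ofReal_mul, ← Complex.ofReal_mul, Complex.normSq_add_mul_I]
    have h1 := Real.sin_sq_add_cos_sq z.re
    have h2 := Real.cosh_sq z.im
    rw [mul_pow, mul_pow, h2]
    linear_combination (Real.sinh z.im ^ 2) * h1
  have hn := norm_nonneg (Complex.sin z)
  rcases le_total 1 |z.im| with h | h
  · have h1 : Real.sinh |z.im| ≤ ‖Complex.sin z‖ := by
      apply le_of_sq_le_sq _ hn
      rw [hsq, ← Real.abs_sinh, sq_abs]
      nlinarith [sq_nonneg (Real.sin z.re)]
    rw [Real.sinh_eq] at h1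
    have h2 := Real.add_one_le_exp |z.im|
    have h3 : Real.exp (-|z.im|) ≤ 1 := Real.exp_le_one_iff.2 (by linarith)
    linarith
  · have hpi := Real.pi_gt_three
    set R := (k + 1 / 2) * Real.pi with hR
    have hk : (0:ℝ) ≤ k := Nat.cast_nonneg k
    have hR1 : 3 / 2 ≤ R := by rw [hR]; nlinarith
    have hnz : z.re ^ 2 + z.im ^ 2 = R ^ 2 := by
      rw [← hz, ← Complex.normSq_eq_norm_sq, Complex.normSq_apply]; ring
    have hx0 := abs_nonneg z.re
    have hx2 : |z.re| ^ 2 = z.re ^ 2 := sq_abs _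
    have hy2 : z.im ^ 2 ≤ 1 := by rw [← sq_abs]; nlinarith [abs_nonneg z.im]
    have hδ0 : 0 ≤ R - |z.re| := by nlinarith [sq_nonneg z.im]
    have hδ : R - |z.re| ≤ 2 / 3 := by
      by_contra hcon
      push Not at hcon
      nlinarith
    have hcR : Real.cos R = 0 := by
      rw [Real.cos_eq_zero_iff]; exact ⟨k, by rw [hR]; push_cast; ring⟩
    have hsR : Real.sin R ^ 2 = 1 := by
      have := Real.sin_sq_add_cos_sq R
      rw [hcR] at this; linarith
    have hcos : Real.cos z.re ^ 2 ≤ 4 / 9 := by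
      have e : Real.cos z.re = Real.sin R * Real.sin (R - |z.re|) := by
        rw [← Real.cos_abs z.re, ← sub_eq_zero]
        conv_lhs => rw [show |z.re| = R - (R - |z.re|) by ring]
        rw [Real.cos_sub, hcR]
        rw [show R - (R - (R - |z.re|)) = R - |z.re| by ring]
        ring
      rw [e, mul_pow, hsR, one_mul]
      have h8 := Real.sin_le hδ0
      have h9 := Real.sin_nonneg_of_nonneg_of_le_pi hδ0 (by linarith)
      nlinarith
    have := Real.sin_sq_add_cos_sq z.re
    have h5 : (1 / 2) ^ 2 ≤ ‖Complex.sin z‖ ^ 2 := by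
      rw [hsq]; nlinarith [sq_nonneg (Real.sinh z.im)]
    have h6 : 1 / 2 ≤ ‖Complex.sin z‖ := le_of_sq_le_sq h5 hn
    have h7 : Real.exp |z.im| ≤ Real.exp 1 := Real.exp_le_exp.2 h
    have := Real.exp_one_lt_d9
    linarith

variable (B : Bun)

/-- center of the circles -/
noncomputable def Bun.cen : ℝ := -B.c / B.len
/-- radii of the circles -/
noncomputable def Bun.rad (k : ℕ) : ℝ := (k + 1 / 2) * Real.pi / B.len

theorem Bun.rad_pos (k : ℕ) : 0 < B.rad k := by
  have := B.len_pos
  have := Real.pi_pos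
  simp only [Bun.rad]; positivity

theorem Bun.rad_tendsto : Tendsto B.rad atTop atTop := by
  have h1 : Tendsto (fun k : ℕ => (k : ℝ) + 1 / 2) atTop atTop :=
    tendsto_atTop_add_const_right _ _ tendsto_natCast_atTop_atTop
  exact (h1.atTop_mul_const Real.pi_pos).atTop_div_const B.len_pos

theorem Bun.om_lower : ∀ᶠ k in atTop, ∀ l ∈ Metric.sphere (B.cen : ℂ) (B.rad k),
    Real.exp (|l.im| * B.len) ≤ 16 * ‖B.om l‖ ∧ B.rad k ≤ 2 * ‖l‖ ∧ 0 < ‖l‖ := by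
  obtain ⟨C, hC0, hC⟩ := B.om_asym
  have hL := B.len_pos
  filter_upwards [B.rad_tendsto.eventually_ge_atTop (2 * |B.cen| + 2 * (16 * C) + 2)] with k hk l hl
  rw [mem_sphere_iff_norm] at hl
  have h1 : B.rad k - |B.cen| ≤ ‖l‖ := by
    have := norm_sub_le l (B.cen : ℂ)
    rw [hl, Complex.norm_real, Real.norm_eq_abs] at this
    linarith
  have hcen := abs_nonneg B.cen
  have hlpos : 0 < ‖l‖ := by linarith
  refine ⟨?_, by linarith, hlpos⟩
  have e : l * B.len + B.c = (l - B.cen) * B.len := by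
    simp only [Bun.cen]; push_cast
    have : (B.len : ℂ) ≠ 0 := by exact_mod_cast hL.ne'
    field_simp; ring
  have h2 := sin_lower k (l * B.len + B.c) (by
    rw [e, norm_mul, hl, Complex.norm_real, Real.norm_of_nonneg hL.le, Bun.rad]; field_simp)
  have him : (l * B.len + B.c).im = l.im * B.len := by simp
  rw [him, abs_mul, abs_of_pos hL] at h2
  have h3 := (hC l).1
  have h4 : 16 * C ≤ ‖l‖ := by linarith
  have h5 : ‖Complex.sin (l * B.len + B.c)‖ ≤ ‖B.om l‖ + ‖B.om l - Complex.sin (l * B.len + B.c)‖ := by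
    have := norm_sub_le (B.om l) (B.om l - Complex.sin (l * B.len + B.c))
    simpa using this
  have h6 : 16 * ‖B.om l - Complex.sin (l * B.len + B.c)‖ ≤ Real.exp (|l.im| * B.len) := by
    have hE := Real.exp_pos (|l.im| * B.len)
    have h7 : C * Real.exp (|l.im| * B.len) * 16 ≤ ‖l‖ * Real.exp (|l.im| * B.len) := by nlinarith
    have h8 : ‖l‖ * (16 * ‖B.om l - Complex.sin (l * B.len + B.c)‖) ≤ ‖l‖ * Real.exp (|l.im| * B.len) := by linarith
    exact le_of_mul_le_mul_left h8 hlpos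
  linarith

theorem Bun.lim_aux {F G : ℝ → ℝ} (hF : ContDiff ℝ 1 F) (hG : ContDiff ℝ 1 G) (s : ℂ) (C : ℝ) (hC : 0 ≤ C)
    (l : ℕ → ℂ) (h1 : Tendsto (fun k => |(l k).im|) atTop atTop)
    (h2 : ∀ᶠ k in atTop, Real.exp (|(l k).im| * B.len) ≤ 16 * ‖B.om (l k)‖)
    (h3 : ∀ᶠ k in atTop, ‖l k‖ * ‖B.eta (l k) + s * B.om (l k)‖ ≤
      ‖l k‖ * Real.exp (-(|(l k).im| * B.len)) + C * Real.exp (|(l k).im| * B.len)) :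
    Tendsto (fun k => l k * (B.num F G (l k) / B.om (l k))) atTop
      (𝓝 ((F B.a * Real.sin B.α - G B.a * Real.cos B.α) + s * (F B.a * Real.cos B.α + G B.a * Real.sin B.α))) := by
  obtain ⟨K, hK0, hK⟩ := B.rem_bound hF hG
  set E : ℂ := F B.a * Real.sin B.α - G B.a * Real.cos B.α
  set E' : ℂ := F B.a * Real.cos B.α + G B.a * Real.sin B.α
  set b0 : ℂ := G B.b * Real.sin B.β + F B.b * Real.cos B.β
  rw [tendsto_iff_norm_sub_tendsto_zero]
  set T : ℕ → ℝ := fun k => |(l k).im| with hT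
  have hL := B.len_pos
  have hinv : Tendsto (fun k => (T k)⁻¹) atTop (𝓝 0) := tendsto_inv_atTop_zero.comp h1
  have hexp : Tendsto (fun k => Real.exp (-(T k * B.len))) atTop (𝓝 0) :=
    Real.tendsto_exp_neg_atTop_nhds_zero.comp (h1.atTop_mul_const hL)
  have hlim : Tendsto (fun k => 16 * (‖b0‖ * Real.exp (-(T k * B.len)) + ‖E'‖ * (Real.exp (-(T k * B.len)) + C * (T k)⁻¹)
      + K * (T k)⁻¹)) atTop (𝓝 (16 * (‖b0‖ * 0 + ‖E'‖ * (0 + C * 0) + K * 0))) := by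
    exact (((hexp.const_mul _).add ((hexp.add (hinv.const_mul C)).const_mul _)).add (hinv.const_mul K)).const_mul 16
  simp only [mul_zero, add_zero] at hlim
  refine squeeze_zero' (Eventually.of_forall fun _ => norm_nonneg _) ?_ hlim
  filter_upwards [h2, h3, h1.eventually_gt_atTop 0] with k g2 g3 g1
  change 0 < T k at g1
  change Real.exp (T k * B.len) ≤ _ at g2
  change _ ≤ ‖l k‖ * Real.exp (-(T k * B.len)) + C * Real.exp (T k * B.len) at g3
  have hE := Real.exp_pos (T k * B.len)
  have hompos : 0 < ‖B.om (l k)‖ := by linarith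
  have homne : B.om (l k) ≠ 0 := norm_pos_iff.1 hompos
  have hTl : T k ≤ ‖l k‖ := Complex.abs_im_le_norm _
  have hlpos : 0 < ‖l k‖ := by linarith
  have e : l k * (B.num F G (l k) / B.om (l k)) - (E + s * E') =
      (b0 - (B.eta (l k) + s * B.om (l k)) * E' + B.rem F G (l k)) / B.om (l k) := by
    rw [← mul_div_assoc, B.parts hF hG]
    field_simp
    ring
  rw [e, norm_div, div_le_iff₀ hompos]
  have f1 : ‖B.rem F G (l k)‖ ≤ K * (T k)⁻¹ * Real.exp (T k * B.len) := by
    have := (hK (l k)).2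
    change T k * _ ≤ K * Real.exp (T k * B.len) at this
    rw [mul_comm, ← le_div_iff₀ g1] at this
    refine this.trans (le_of_eq ?_)
    ring
  have f2 : ‖B.eta (l k) + s * B.om (l k)‖ ≤ Real.exp (-(T k * B.len)) + C * (T k)⁻¹ * Real.exp (T k * B.len) := by
    have e1 : ‖l k‖⁻¹ ≤ (T k)⁻¹ := inv_anti₀ g1 hTl
    have e2 : ‖B.eta (l k) + s * B.om (l k)‖ ≤ Real.exp (-(T k * B.len)) + C * ‖l k‖⁻¹ * Real.exp (T k * B.len) := by
      apply le_of_mul_le_mul_left _ hlpos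
      refine g3.trans (le_of_eq ?_)
      field_simp
    refine e2.trans ?_
    gcongr
  have f3 : Real.exp (-(T k * B.len)) ≤ Real.exp (-(T k * B.len)) * Real.exp (T k * B.len) := by
    apply le_mul_of_one_le_right (Real.exp_pos _).le
    exact Real.one_le_exp (by positivity)
  have f4 : 1 = Real.exp (-(T k * B.len)) * Real.exp (T k * B.len) := by
    rw [← Real.exp_add]; simp
  set D := Real.exp (-(T k * B.len))
  set U := Real.exp (T k * B.len)
  set I := (T k)⁻¹
  have hI : 0 < I := inv_pos.2 g1
  have hD : 0 < D := Real.exp_pos _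
  calc ‖b0 - (B.eta (l k) + s * B.om (l k)) * E' + B.rem F G (l k)‖
      ≤ ‖b0‖ + ‖B.eta (l k) + s * B.om (l k)‖ * ‖E'‖ + ‖B.rem F G (l k)‖ := by
        refine (norm_add_le _ _).trans ?_
        gcongr
        refine (norm_sub_le _ _).trans ?_
        rw [norm_mul]
    _ ≤ ‖b0‖ * (D * U) + (D * U + C * I * U) * ‖E'‖ + K * I * U := by
        rw [← f4, mul_one]
        have : D ≤ 1 := by rw [f4]; exact f3
        gcongr
        linarith
    _ = (‖b0‖ * D + ‖E'‖ * (D + C * I) + K * I) * U := by ring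
    _ ≤ (‖b0‖ * D + ‖E'‖ * (D + C * I) + K * I) * (16 * ‖B.om (l k)‖) := by gcongr
    _ = _ := by ring

end DiracAux

namespace DiracAux
open Set Filter Topology MeasureTheory

variable (B : Bun)

theorem Bun.phi_bound {F G : ℝ → ℝ} (hF : ContDiff ℝ 1 F) (hG : ContDiff ℝ 1 G) : ∃ C : ℝ, ∀ l,
    Real.exp (|l.im| * B.len) ≤ 16 * ‖B.om l‖ → ‖l * (B.num F G l / B.om l)‖ ≤ C := by
  obtain ⟨K, hK0, hK⟩ := B.rem_bound hF hG
  obtain ⟨C, hC0, hC⟩ := B.bound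
  set E : ℂ := F B.a * Real.sin B.α - G B.a * Real.cos B.α
  set E' : ℂ := F B.a * Real.cos B.α + G B.a * Real.sin B.α
  set b0 : ℂ := G B.b * Real.sin B.β + F B.b * Real.cos B.β
  refine ⟨16 * ‖b0‖ + ‖E‖ + 16 * (2 * C) * ‖E'‖ + 16 * K, fun l hl => ?_⟩
  have hE := Real.exp_pos (|l.im| * B.len)
  have hompos : 0 < ‖B.om l‖ := by linarith
  have homne : B.om l ≠ 0 := norm_pos_iff.1 hompos
  rw [← mul_div_assoc, B.parts hF hG, norm_div, div_le_iff₀ hompos]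
  set U := Real.exp (|l.im| * B.len)
  have hU1 : 1 ≤ U := Real.one_le_exp (mul_nonneg (abs_nonneg _) B.len_pos.le)
  have h1 : ‖B.eta l‖ ≤ 2 * C * U := by
    have := hC l B.a (left_mem_Icc.2 B.hab.le)
    rw [show B.S B.a = B.len from rfl] at this
    refine (norm_sub_le _ _).trans ?_
    rw [norm_mul, norm_mul, Complex.norm_real, Complex.norm_real, Real.norm_eq_abs, Real.norm_eq_abs]
    have f1 := mul_le_mul this.1 (Real.abs_sin_le_one B.α) (abs_nonneg _) (by positivity)
    have f2 := mul_le_mul this.2 (Real.abs_cos_le_one B.α) (abs_nonneg _) (by positivity)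
    linarith
  have h2 := (hK l).1
  change _ ≤ K * U at h2
  calc ‖b0 + (B.om l * E - B.eta l * E') + B.rem F G l‖
      ≤ ‖b0‖ + (‖B.om l‖ * ‖E‖ + ‖B.eta l‖ * ‖E'‖) + ‖B.rem F G l‖ := by
        refine (norm_add_le _ _).trans ?_
        gcongr
        refine (norm_add_le _ _).trans ?_
        gcongr
        refine (norm_sub_le _ _).trans ?_
        rw [norm_mul, norm_mul]
    _ ≤ ‖b0‖ * U + (‖B.om l‖ * ‖E‖ + 2 * C * U * ‖E'‖) + K * U := by
        gcongr
        exact le_mul_of_one_le_right (norm_nonneg _) hU1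
    _ ≤ ‖b0‖ * (16 * ‖B.om l‖) + (‖B.om l‖ * ‖E‖ + 2 * C * (16 * ‖B.om l‖) * ‖E'‖) + K * (16 * ‖B.om l‖) := by
        gcongr
    _ = _ := by ring

theorem Bun.circle_limit {F G : ℝ → ℝ} (hF : ContDiff ℝ 1 F) (hG : ContDiff ℝ 1 G) :
    Tendsto (fun k => ∮ z in C((B.cen : ℂ), B.rad k), B.num F G z / B.om z) atTop
      (𝓝 (2 * Real.pi * Complex.I * (F B.a * Real.sin B.α - G B.a * Real.cos B.α))) := by
  obtain ⟨K, hK⟩ := B.phi_bound hF hG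
  obtain ⟨C, hC0, hC⟩ := B.om_asym
  set E : ℂ := F B.a * Real.sin B.α - G B.a * Real.cos B.α with hE
  set E' : ℂ := F B.a * Real.cos B.α + G B.a * Real.sin B.α with hE'
  set Φ : ℂ → ℂ := fun z => B.num F G z / B.om z with hΦ
  set f : ℝ → ℂ := fun θ => if θ < Real.pi then Complex.I * (E + Complex.I * E') else Complex.I * (E + -Complex.I * E') with hf
  have hpi := Real.pi_pos
  have hsm : ∀ k θ, circleMap (B.cen : ℂ) (B.rad k) θ ∈ Metric.sphere (B.cen : ℂ) (B.rad k) := fun k θ =>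
    circleMap_mem_sphere _ (B.rad_pos k).le θ
  have him : ∀ k θ, (circleMap (B.cen : ℂ) (B.rad k) θ).im = B.rad k * Real.sin θ := by
    intro k θ
    simp [circleMap, Complex.exp_ofReal_mul_I_im]
  have hmain : Tendsto (fun k => ∫ θ in (0:ℝ)..(2 * Real.pi), deriv (circleMap (B.cen : ℂ) (B.rad k)) θ •
      Φ (circleMap (B.cen : ℂ) (B.rad k) θ)) atTop (𝓝 (∫ θ in (0:ℝ)..(2 * Real.pi), f θ)) := by
    apply intervalIntegral.tendsto_integral_filter_of_dominated_convergence (fun _ => 2 * K)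
    · filter_upwards [B.om_lower] with k hk
      apply Continuous.aestronglyMeasurable
      apply Continuous.fun_smul
      · have hcm := continuous_circleMap 0 (B.rad k)
        have hd : deriv (circleMap (B.cen : ℂ) (B.rad k)) = fun θ => circleMap 0 (B.rad k) θ * Complex.I := by
          ext θ; rw [deriv_circleMap]
        rw [hd]
        exact hcm.mul_const _
      · refine Continuous.div ?_ ?_ ?_
        · exact (B.num_diff hF.continuous hG.continuous).continuous.comp (continuous_circleMap _ _)
        · exact B.om_diff.continuous.comp (continuous_circleMap _ _)
        · intro θ h0
          have := (hk _ (hsm k θ)).1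
          rw [h0, norm_zero, mul_zero] at this
          exact absurd (Real.exp_pos _) (not_lt.2 this)
    · filter_upwards [B.om_lower] with k hk
      refine Eventually.of_forall fun θ _ => ?_
      obtain ⟨h1, h2, h3⟩ := hk _ (hsm k θ)
      have h4 := hK _ h1
      rw [deriv_circleMap, norm_smul, norm_mul, Complex.norm_I, norm_circleMap_zero, mul_one, abs_of_pos (B.rad_pos k)]
      rw [norm_mul] at h4
      have := mul_le_mul_of_nonneg_right h2 (norm_nonneg (Φ (circleMap (B.cen : ℂ) (B.rad k) θ)))
      linarith
    · exact intervalIntegrable_const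
    · have hne : ∀ᵐ θ : ℝ, θ ≠ Real.pi ∧ θ ≠ 2 * Real.pi := by
        have h1 : ∀ᵐ θ : ℝ, θ ≠ Real.pi := by simp [ae_iff, measure_singleton]
        have h2 : ∀ᵐ θ : ℝ, θ ≠ 2 * Real.pi := by simp [ae_iff, measure_singleton]
        exact h1.and h2
      filter_upwards [hne] with θ hθ hmem
      rw [uIoc_of_le (by positivity)] at hmem
      -- reduce to l * Φ
      have hred : ∀ v, Tendsto (fun k => circleMap (B.cen : ℂ) (B.rad k) θ * Φ (circleMap (B.cen : ℂ) (B.rad k) θ)) atTop (𝓝 v) →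
          Tendsto (fun k => deriv (circleMap (B.cen : ℂ) (B.rad k)) θ • Φ (circleMap (B.cen : ℂ) (B.rad k) θ)) atTop
            (𝓝 (Complex.I * v)) := by
        intro v hv
        have h1 : Tendsto (fun k => (B.cen : ℂ) * Φ (circleMap (B.cen : ℂ) (B.rad k) θ)) atTop (𝓝 0) := by
          have hb : Tendsto (fun k => 2 * |B.cen| * K * (B.rad k)⁻¹) atTop (𝓝 0) := by
            have := (tendsto_inv_atTop_zero.comp B.rad_tendsto).const_mul (2 * |B.cen| * K)
            simpa using this
          refine squeeze_zero_norm' ?_ hb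
          filter_upwards [B.om_lower] with k hk
          obtain ⟨h1, h2, h3⟩ := hk _ (hsm k θ)
          have h4 := hK _ h1
          rw [norm_mul] at h4
          have h5 := mul_le_mul_of_nonneg_right h2 (norm_nonneg (Φ (circleMap (B.cen : ℂ) (B.rad k) θ)))
          have h6 : ‖Φ (circleMap (B.cen : ℂ) (B.rad k) θ)‖ ≤ 2 * K * (B.rad k)⁻¹ := by
            rw [← div_eq_mul_inv, le_div_iff₀ (B.rad_pos k)]
            linarith
          rw [norm_mul, Complex.norm_real, Real.norm_eq_abs]
          calc _ ≤ |B.cen| * (2 * K * (B.rad k)⁻¹) := by gcongr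
            _ = _ := by ring
        have h2 := (hv.sub h1).const_mul Complex.I
        rw [sub_zero] at h2
        refine h2.congr fun k => ?_
        rw [deriv_circleMap, smul_eq_mul]
        simp only [circleMap]
        ring
      have hlow : ∀ᶠ k in atTop, Real.exp (|(circleMap (B.cen : ℂ) (B.rad k) θ).im| * B.len) ≤
          16 * ‖B.om (circleMap (B.cen : ℂ) (B.rad k) θ)‖ := by
        filter_upwards [B.om_lower] with k hk
        exact (hk _ (hsm k θ)).1
      have hT : Real.sin θ ≠ 0 → Tendsto (fun k => |(circleMap (B.cen : ℂ) (B.rad k) θ).im|) atTop atTop := by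
        intro hs
        simp only [him, abs_mul]
        refine (B.rad_tendsto.atTop_mul_const (abs_pos.2 hs)).congr fun k => ?_
        rw [abs_of_pos (B.rad_pos k)]
      by_cases hlt : θ < Real.pi
      · have hs : 0 < Real.sin θ := Real.sin_pos_of_pos_of_lt_pi hmem.1 hlt
        have := B.lim_aux hF hG Complex.I C hC0 _ (hT hs.ne') hlow (Eventually.of_forall fun k => by
          have h1 := (hC (circleMap (B.cen : ℂ) (B.rad k) θ)).2.1
          rw [abs_of_pos (a := (circleMap (B.cen : ℂ) (B.rad k) θ).im)] at h1 ⊢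
          · exact h1
          · rw [him]; exact mul_pos (B.rad_pos k) hs
          · rw [him]; exact mul_pos (B.rad_pos k) hs)
        simp only [hf, if_pos hlt]
        exact hred _ this
      · have hs : Real.sin θ < 0 := by
          have h1 : Real.pi < θ := lt_of_le_of_ne (not_lt.1 hlt) (Ne.symm hθ.1)
          have h2 : θ < 2 * Real.pi := lt_of_le_of_ne hmem.2 hθ.2
          have := Real.sin_pos_of_pos_of_lt_pi (x := θ - Real.pi) (by linarith) (by linarith)
          rw [Real.sin_sub_pi] at this
          linarith
        have := B.lim_aux hF hG (-Complex.I) C hC0 _ (hT hs.ne) hlow (Eventually.of_forall fun k => by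
          have h1 := (hC (circleMap (B.cen : ℂ) (B.rad k) θ)).2.2
          have hneg : (circleMap (B.cen : ℂ) (B.rad k) θ).im < 0 := by
            rw [him]; exact mul_neg_of_pos_of_neg (B.rad_pos k) hs
          rw [abs_of_neg hneg] at h1 ⊢
          rw [neg_mul, ← sub_eq_add_neg, neg_mul, neg_neg]
          rw [neg_mul] at h1
          exact h1)
        simp only [hf, if_neg hlt]
        exact hred _ this
  have hval : ∫ θ in (0:ℝ)..(2 * Real.pi), f θ = 2 * Real.pi * Complex.I * E := by
    have e1 : ∫ θ in (0:ℝ)..Real.pi, f θ = Real.pi * (Complex.I * (E + Complex.I * E')) := by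
      rw [intervalIntegral.integral_congr_ae (g := fun _ => Complex.I * (E + Complex.I * E'))]
      · simp; ring
      · have h1 : ∀ᵐ θ : ℝ, θ ≠ Real.pi := by simp [ae_iff, measure_singleton]
        filter_upwards [h1] with θ h2 h3
        rw [uIoc_of_le hpi.le] at h3
        simp only [hf, if_pos (lt_of_le_of_ne h3.2 h2)]
    have e2 : ∫ θ in Real.pi..(2 * Real.pi), f θ = Real.pi * (Complex.I * (E + -Complex.I * E')) := by
      rw [intervalIntegral.integral_congr (g := fun _ => Complex.I * (E + -Complex.I * E'))]
      · simp; ring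
      · intro θ h3
        rw [uIcc_of_le (by linarith)] at h3
        simp only [hf, if_neg (not_lt.2 h3.1)]
    have hi : ∀ u v, IntervalIntegrable f volume u v := by
      intro u v
      apply IntervalIntegrable.mono_fun (g := f) (f := fun _ => ‖Complex.I * (E + Complex.I * E')‖ + ‖Complex.I * (E + -Complex.I * E')‖) intervalIntegrable_const
      · apply Measurable.aestronglyMeasurable
        exact Measurable.ite measurableSet_Iio measurable_const measurable_const
      · refine Eventually.of_forall fun θ => ?_
        rw [Real.norm_of_nonneg (by positivity)]
        simp only [hf]
        split_ifs
        · exact le_add_of_nonneg_right (norm_nonneg _)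
        · exact le_add_of_nonneg_left (norm_nonneg _)
    rw [← intervalIntegral.integral_add_adjacent_intervals (hi 0 Real.pi) (hi Real.pi (2 * Real.pi)), e1, e2]
    ring
  rw [hval] at hmain
  exact hmain

end DiracAux

namespace DiracAux
open Set Filter Topology MeasureTheory


theorem shift_Q (a : ℤ → ℝ) (ha : Tendsto a cofinite (𝓝 0)) (E : ℝ) (P Q : ℤ) :
    Tendsto (fun k : ℕ => ∑ n ∈ Finset.Icc (P - k) (Q + 1 + k), a n) atTop (𝓝 E) ↔
    Tendsto (fun k : ℕ => ∑ n ∈ Finset.Icc (P - k) (Q + k), a n) atTop (𝓝 E) := by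
  have h0 : Tendsto (fun k : ℕ => a (Q + 1 + k)) atTop (𝓝 0) := by
    have hinj : Function.Injective (fun k : ℕ => Q + 1 + (k : ℤ)) := fun x y h => by simpa using h
    have := ha.comp hinj.tendsto_cofinite
    rwa [Nat.cofinite_eq_atTop] at this
  have he : (fun k : ℕ => ∑ n ∈ Finset.Icc (P - k) (Q + 1 + k), a n) =ᶠ[atTop]
      fun k : ℕ => ∑ n ∈ Finset.Icc (P - k) (Q + k), a n + a (Q + 1 + k) := by
    filter_upwards [eventually_ge_atTop (P - Q).toNat] with k hk
    have : Finset.Icc (P - (k : ℤ)) (Q + 1 + k) = insert (Q + 1 + k : ℤ) (Finset.Icc (P - k) (Q + k)) := by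
      ext x; simp only [Finset.mem_Icc, Finset.mem_insert]; omega
    rw [this, Finset.sum_insert (by simp), add_comm]
  rw [tendsto_congr' he]
  constructor
  · intro h; simpa using h.sub h0
  · intro h; simpa using h.add h0

theorem shift_P (a : ℤ → ℝ) (ha : Tendsto a cofinite (𝓝 0)) (E : ℝ) (P Q : ℤ) :
    Tendsto (fun k : ℕ => ∑ n ∈ Finset.Icc (P - k) (Q + k), a n) atTop (𝓝 E) ↔
    Tendsto (fun k : ℕ => ∑ n ∈ Finset.Icc (P + 1 - k) (Q + k), a n) atTop (𝓝 E) := by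
  have h0 : Tendsto (fun k : ℕ => a (P - k)) atTop (𝓝 0) := by
    have hinj : Function.Injective (fun k : ℕ => P - (k : ℤ)) := fun x y h => by simpa using h
    have := ha.comp hinj.tendsto_cofinite
    rwa [Nat.cofinite_eq_atTop] at this
  have he : (fun k : ℕ => ∑ n ∈ Finset.Icc (P - k) (Q + k), a n) =ᶠ[atTop]
      fun k : ℕ => ∑ n ∈ Finset.Icc (P + 1 - k) (Q + k), a n + a (P - k) := by
    filter_upwards [eventually_ge_atTop (P - Q).toNat] with k hk
    have : Finset.Icc (P - (k : ℤ)) (Q + k) = insert (P - k : ℤ) (Finset.Icc (P + 1 - k) (Q + k)) := by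
      ext x; simp only [Finset.mem_Icc, Finset.mem_insert]; omega
    rw [this, Finset.sum_insert (by simp), add_comm]
  rw [tendsto_congr' he]
  constructor
  · intro h; simpa using h.sub h0
  · intro h; simpa using h.add h0

theorem shift_all (a : ℤ → ℝ) (ha : Tendsto a cofinite (𝓝 0)) (E : ℝ) (P Q : ℤ)
    (h : Tendsto (fun k : ℕ => ∑ n ∈ Finset.Icc (P - k) (Q + k), a n) atTop (𝓝 E)) :
    Tendsto (fun k : ℕ => ∑ n ∈ Finset.Icc (-(k : ℤ)) k, a n) atTop (𝓝 E) := by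
  have h1 : ∀ Q : ℤ, ∀ P : ℤ, (Tendsto (fun k : ℕ => ∑ n ∈ Finset.Icc (P - k) (Q + k), a n) atTop (𝓝 E) ↔
      Tendsto (fun k : ℕ => ∑ n ∈ Finset.Icc (P - k) (0 + k), a n) atTop (𝓝 E)) := by
    intro Q P
    induction Q using Int.induction_on with
    | zero => rfl
    | succ i ih => rw [shift_Q a ha, ih]
    | pred i ih => rw [← ih, ← shift_Q a ha]; simp
  have h2 : ∀ P : ℤ, (Tendsto (fun k : ℕ => ∑ n ∈ Finset.Icc (P - k) (0 + k), a n) atTop (𝓝 E) ↔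
      Tendsto (fun k : ℕ => ∑ n ∈ Finset.Icc (0 - (k : ℤ)) (0 + k), a n) atTop (𝓝 E)) := by
    intro P
    induction P using Int.induction_on with
    | zero => rfl
    | succ i ih => rw [← shift_P a ha, ih]
    | pred i ih => rw [← ih, shift_P a ha]; simp
  have := (h2 P).1 ((h1 Q P).1 h)
  simpa using this

theorem counting (ζ : ℤ → ℝ) (hζ : StrictMono ζ) (J : ℕ)
    (hb : ∀ j : ℤ, (J : ℤ) ≤ |j| → ∃ n, (j - 1 / 2) * Real.pi < ζ n ∧ ζ n < (j + 1 / 2) * Real.pi ∧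
      ∀ m, (j - 1 / 2) * Real.pi ≤ ζ m → ζ m ≤ (j + 1 / 2) * Real.pi → m = n) :
    ∃ P Q : ℤ, ∀ k : ℕ, J ≤ k → ∀ n, |ζ n| < (k + 1 / 2) * Real.pi ↔ P - k ≤ n ∧ n ≤ Q + k := by
  choose! N hN1 hN2 hN3 using hb
  have hpi := Real.pi_pos
  have hup : ∀ j : ℤ, (J : ℤ) ≤ j → N (j + 1) = N j + 1 := by
    intro j hj
    have hj1 : (J : ℤ) ≤ |j| := hj.trans (le_abs_self _)
    have hj2 : (J : ℤ) ≤ |j + 1| := by have := le_abs_self (j + 1); omega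
    have e1 : ((j + 1 : ℤ) - 1 / 2 : ℝ) = j + 1 / 2 := by push_cast; ring
    have h1 := hN1 (j + 1) hj2
    have h3 := hN3 (j + 1) hj2
    rw [e1] at h1 h3
    have hlt : N j < N (j + 1) := hζ.lt_iff_lt.1 ((hN2 j hj1).trans h1)
    have hle : ζ (N j + 1) ≤ ζ (N (j + 1)) := hζ.monotone (by omega)
    have hgt : ζ (N j) < ζ (N j + 1) := hζ (by omega)
    rcases le_total (ζ (N j + 1)) ((j + 1 / 2) * Real.pi) with h | h
    · have := hN3 j hj1 (N j + 1) ((hN1 j hj1).trans hgt).le h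
      omega
    · exact (h3 (N j + 1) h (hle.trans (hN2 (j + 1) hj2).le)).symm
  have hdn : ∀ j : ℤ, j ≤ -(J : ℤ) → N (j - 1) = N j - 1 := by
    intro j hj
    have hj1 : (J : ℤ) ≤ |j| := by have := neg_le_abs j; omega
    have hj2 : (J : ℤ) ≤ |j - 1| := by have := neg_le_abs (j - 1); omega
    have e1 : ((j - 1 : ℤ) + 1 / 2 : ℝ) = j - 1 / 2 := by push_cast; ring
    have h1 := hN2 (j - 1) hj2
    have h3 := hN3 (j - 1) hj2
    rw [e1] at h1 h3
    have hlt : N (j - 1) < N j := hζ.lt_iff_lt.1 (h1.trans (hN1 j hj1))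
    have hle : ζ (N (j - 1)) ≤ ζ (N j - 1) := hζ.monotone (by omega)
    have hgt : ζ (N j - 1) < ζ (N j) := hζ (by omega)
    rcases le_total ((j - 1 / 2) * Real.pi) (ζ (N j - 1)) with h | h
    · have := hN3 j hj1 (N j - 1) h (hgt.trans (hN2 j hj1)).le
      omega
    · exact (h3 (N j - 1) ((hN1 (j - 1) hj2).le.trans hle) h).symm
  have hQ : ∀ k : ℕ, J ≤ k → N k = N J - J + k := by
    intro k hk
    induction k, hk using Nat.le_induction with
    | base => ring
    | succ k hk ih =>
      have := hup k (by exact_mod_cast hk)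
      push_cast; rw [this, ih]; ring
  have hP : ∀ k : ℕ, J ≤ k → N (-k) = N (-J) + J - k := by
    intro k hk
    induction k, hk using Nat.le_induction with
    | base => ring
    | succ k hk ih =>
      have := hdn (-k) (by have : (J:ℤ) ≤ k := by exact_mod_cast hk
                           omega)
      push_cast; rw [show (-((k:ℤ) + 1)) = -k - 1 by ring, this, ih]; ring
  refine ⟨N (-J) + J, N J - J, fun k hk n => ?_⟩
  rw [← hP k hk, ← hQ k hk, abs_lt]
  have hkJ : (J : ℤ) ≤ k := by exact_mod_cast hk
  have hk1 : (J : ℤ) ≤ |(k : ℤ)| := hkJ.trans (le_abs_self _)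
  have hk2 : (J : ℤ) ≤ |-(k : ℤ)| := by rwa [abs_neg]
  have hk3 : (J : ℤ) ≤ |(k + 1 : ℤ)| := by have := le_abs_self (k + 1 : ℤ); omega
  have hk4 : (J : ℤ) ≤ |(-k - 1 : ℤ)| := by have := neg_le_abs (-k - 1 : ℤ); omega
  constructor
  · rintro ⟨h1, h2⟩
    constructor
    · have := hN2 (-k - 1) hk4
      rw [hdn (-k) (by omega)] at this
      push_cast at this
      have h3 : ζ (N (-k) - 1) < ζ n := lt_of_lt_of_le this (by linarith)
      have := hζ.lt_iff_lt.1 h3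
      omega
    · have := hN1 (k + 1) hk3
      rw [hup k (by omega)] at this
      push_cast at this
      have h3 : ζ n < ζ (N k + 1) := lt_of_le_of_lt (by linarith) this
      have := hζ.lt_iff_lt.1 h3
      omega
  · rintro ⟨h1, h2⟩
    have e1 := hN1 (-k) hk2
    have e2 := hN2 k hk1
    push_cast at e1 e2
    have f1 := hζ.monotone h1
    have f2 := hζ.monotone h2
    constructor <;> linarith

variable (B : Bun)

theorem Bun.near : ∃ K : ℝ, 0 < K ∧ ∀ l l' : ℝ, K ≤ |l| → K ≤ |l'| → |(l - l') * B.len| ≤ Real.pi / 3 →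
    ∀ x ∈ Icc B.a B.b, 1 / 4 ≤ (B.X l x * B.X l' x + B.Y l x * B.Y l' x).re := by
  obtain ⟨C, hC0, hC⟩ := B.asym
  obtain ⟨C₀, hC₀, hb⟩ := B.bound
  refine ⟨4 * C * (2 * C₀ + 1) + 1, by positivity, fun l l' hl hl' hll x hx => ?_⟩
  set K := 4 * C * (2 * C₀ + 1) + 1 with hK
  have hKp : 0 < K := by positivity
  have key : ∀ l : ℝ, K ≤ |l| → ‖(B.X l x + Complex.I * B.Y l x) - Complex.exp (Complex.I * (l * B.S x - B.w x)) *
      (Real.sin B.β - Complex.I * Real.cos B.β)‖ ≤ C / K ∧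
    ‖(B.X l x - Complex.I * B.Y l x) - Complex.exp (-Complex.I * (l * B.S x - B.w x)) *
      (Real.sin B.β + Complex.I * Real.cos B.β)‖ ≤ C / K := by
    intro l hl
    have := hC l x hx
    rw [Complex.ofReal_im, abs_zero, zero_mul, Real.exp_zero, mul_one, Complex.norm_real, Real.norm_eq_abs] at this
    constructor
    · rw [le_div_iff₀ hKp, mul_comm]
      exact (mul_le_mul_of_nonneg_right hl (norm_nonneg _)).trans this.1
    · rw [le_div_iff₀ hKp, mul_comm]
      exact (mul_le_mul_of_nonneg_right hl (norm_nonneg _)).trans this.2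
  obtain ⟨k1, k2⟩ := key l hl
  obtain ⟨k1', k2'⟩ := key l' hl'
  have bd := hb l' x hx
  rw [Complex.ofReal_im, abs_zero, zero_mul, Real.exp_zero, mul_one] at bd
  have hss : (Real.sin B.β - Complex.I * Real.cos B.β : ℂ) * (Real.sin B.β + Complex.I * Real.cos B.β) = 1 := by
    have : (Real.sin B.β : ℂ) ^ 2 + (Real.cos B.β : ℂ) ^ 2 = 1 := by exact_mod_cast Real.sin_sq_add_cos_sq B.β
    linear_combination this - (Real.cos B.β : ℂ) ^ 2 * Complex.I_sq
  have n1 : ‖(Real.sin B.β - Complex.I * Real.cos B.β : ℂ)‖ = 1 := by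
    have := Complex.normSq_eq_norm_sq (Real.sin B.β - Complex.I * Real.cos B.β : ℂ)
    rw [Complex.normSq_apply] at this
    simp [-Complex.ofReal_sin, -Complex.ofReal_cos] at this
    have h2 := Real.sin_sq_add_cos_sq B.β
    have h3 : ‖(Real.sin B.β - Complex.I * Real.cos B.β : ℂ)‖ ^ 2 = 1 := by push_cast at this ⊢; nlinarith
    exact (pow_eq_one_iff_of_nonneg (norm_nonneg _) two_ne_zero).1 h3
  have n2 : ‖(Real.sin B.β + Complex.I * Real.cos B.β : ℂ)‖ = 1 := by
    have := congrArg norm hss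
    rwa [norm_mul, n1, one_mul, norm_one] at this
  have m1 : ‖Complex.exp (Complex.I * (l * B.S x - B.w x))‖ = 1 := by simp [Complex.norm_exp]
  have m2 : ‖Complex.exp (-Complex.I * (l * B.S x - B.w x))‖ = 1 := by simp [Complex.norm_exp]
  set Pp := Complex.exp (Complex.I * (l * B.S x - B.w x)) * (Real.sin B.β - Complex.I * Real.cos B.β) with hPp
  set Pm := Complex.exp (-Complex.I * (l * B.S x - B.w x)) * (Real.sin B.β + Complex.I * Real.cos B.β) with hPm
  set Pp' := Complex.exp (Complex.I * (l' * B.S x - B.w x)) * (Real.sin B.β - Complex.I * Real.cos B.β) with hPp'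
  set Pm' := Complex.exp (-Complex.I * (l' * B.S x - B.w x)) * (Real.sin B.β + Complex.I * Real.cos B.β) with hPm'
  have nP : ‖Pp‖ = 1 := by rw [hPp, norm_mul, m1, n1, one_mul]
  have nP' : ‖Pm‖ = 1 := by rw [hPm, norm_mul, m2, n2, one_mul]
  set zp := B.X l x + Complex.I * B.Y l x
  set zm := B.X l x - Complex.I * B.Y l x
  set zp' := B.X l' x + Complex.I * B.Y l' x
  set zm' := B.X l' x - Complex.I * B.Y l' x
  have bz1 : ‖zm'‖ ≤ 2 * C₀ := by
    refine (norm_sub_le _ _).trans ?_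
    rw [norm_mul, Complex.norm_I]; linarith
  have bz2 : ‖zp'‖ ≤ 2 * C₀ := by
    refine (norm_add_le _ _).trans ?_
    rw [norm_mul, Complex.norm_I]; linarith
  have hcK : 0 ≤ C / K := by positivity
  have e1 : ‖zp * zm' - Pp * Pm'‖ ≤ C / K * (2 * C₀ + 1) := by
    have : zp * zm' - Pp * Pm' = (zp - Pp) * zm' + Pp * (zm' - Pm') := by ring
    rw [this]
    refine (norm_add_le _ _).trans ?_
    rw [norm_mul, norm_mul, nP]
    have := mul_le_mul k1 bz1 (norm_nonneg _) hcK
    linarith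
  have e2 : ‖zm * zp' - Pm * Pp'‖ ≤ C / K * (2 * C₀ + 1) := by
    have : zm * zp' - Pm * Pp' = (zm - Pm) * zp' + Pm * (zp' - Pp') := by ring
    rw [this]
    refine (norm_add_le _ _).trans ?_
    rw [norm_mul, norm_mul, nP']
    have := mul_le_mul k2 bz2 (norm_nonneg _) hcK
    linarith
  have e3 : C / K * (2 * C₀ + 1) ≤ 1 / 4 := by
    rw [div_mul_eq_mul_div, div_le_iff₀ hKp, hK]; nlinarith
  have e4 : Pp * Pm' + Pm * Pp' = 2 * Complex.cos (((l - l') * B.S x : ℝ)) := by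
    have g1 : Complex.exp (Complex.I * (l * B.S x - B.w x)) * Complex.exp (-Complex.I * (l' * B.S x - B.w x)) =
        Complex.exp ((((l - l') * B.S x : ℝ) : ℂ) * Complex.I) := by
      rw [← Complex.exp_add]; congr 1; push_cast; ring
    have g2 : Complex.exp (-Complex.I * (l * B.S x - B.w x)) * Complex.exp (Complex.I * (l' * B.S x - B.w x)) =
        Complex.exp (-(((l - l') * B.S x : ℝ) : ℂ) * Complex.I) := by
      rw [← Complex.exp_add]; congr 1; push_cast; ring
    rw [Complex.two_cos, ← g1, ← g2, hPp, hPm, hPp', hPm']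
    linear_combination (Complex.exp (Complex.I * (l * B.S x - B.w x)) * Complex.exp (-Complex.I * (l' * B.S x - B.w x)) +
      Complex.exp (-Complex.I * (l * B.S x - B.w x)) * Complex.exp (Complex.I * (l' * B.S x - B.w x))) * hss
  have hcos : 1 / 2 ≤ Real.cos ((l - l') * B.S x) := by
    rw [← Real.cos_abs, ← Real.cos_pi_div_three]
    apply Real.cos_le_cos_of_nonneg_of_le_pi (abs_nonneg _) (by linarith [Real.pi_pos])
    refine le_trans ?_ hll
    rw [abs_mul, abs_mul]
    have h1 : B.S x ≤ B.len := B.S_anti (left_mem_Icc.2 B.hab.le) hx hx.1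
    have h2 := B.S_nonneg hx
    rw [abs_of_nonneg h2, abs_of_nonneg (h2.trans h1)]
    gcongr
  have e5 : 2 * (B.X l x * B.X l' x + B.Y l x * B.Y l' x) = 2 * Complex.cos (((l - l') * B.S x : ℝ)) +
      ((zp * zm' - Pp * Pm') + (zm * zp' - Pm * Pp')) := by
    rw [← e4]; simp only [zp, zm, zp', zm']
    linear_combination (2 * B.Y l x * B.Y l' x) * Complex.I_sq
  have e6 := congrArg Complex.re e5
  rw [← Complex.ofReal_cos] at e6
  simp only [Complex.add_re] at e6
  have t1 : (2 * (B.X l x * B.X l' x + B.Y l x * B.Y l' x)).re = 2 * (B.X l x * B.X l' x + B.Y l x * B.Y l' x).re := by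
    simp
  have t2 : (2 * ((Real.cos ((l - l') * B.S x) : ℝ) : ℂ)).re = 2 * Real.cos ((l - l') * B.S x) := by
    rw [Complex.re_mul_ofReal]; simp
  rw [t1, t2] at e6
  have a1 := (abs_le.1 ((Complex.abs_re_le_norm _).trans e1)).1
  have a2 := (abs_le.1 ((Complex.abs_re_le_norm _).trans e2)).1
  linarith

end DiracAux

namespace DiracAux
open Set Filter Topology MeasureTheory


/-- weighted pairing of two solutions -/
noncomputable def Bun.inn (B : Bun) (l l' : ℂ) : ℂ :=
  ∫ x in B.a..B.b, B.r x * (B.X l x * B.X l' x + B.Y l x * B.Y l' x)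

theorem Bun.inn_diff (B : Bun) (l' : ℂ) : Differentiable ℂ fun l => B.inn l l' := by
  have hc5 := B.hr.continuous
  have h1 := B.hXc l'
  have h2 := B.hYc l'
  have := B.hdN (fun x => B.r x * B.X l' x) (fun x => B.r x * B.Y l' x) (by fun_prop) (by fun_prop)
  convert this using 1
  ext l
  simp only [Bun.inn]
  congr 1; ext x; ring

/-- the bundle together with the list of eigenpairs -/
structure Eig extends Bun where
  lam : ℤ → ℝ
  f : ℤ → ℝ → ℝ
  g : ℤ → ℝ → ℝ
  hu : ∀ n, toDat.IsSol (lam n) (fun x => (f n x : ℂ)) (fun x => (g n x : ℂ))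
  hbca : ∀ n, f n a * Real.cos α + g n a * Real.sin α = 0
  hbcb : ∀ n, f n b * Real.cos β + g n b * Real.sin β = 0
  hord : ∀ n, lam n ≤ lam (n + 1)
  hgrow : Tendsto (fun n => |lam n|) cofinite atTop
  hzero : ∀ l : ℂ, toBun.om l = 0 → ∃ n, l = lam n
  horth : ∀ m n : ℤ, (∫ x in a..b, r x * (f m x * f n x + g m x * g n x)) = if m = n then 1 else 0

variable (W : Eig)

/-- proportionality constant -/
noncomputable def Eig.d (n : ℤ) : ℝ := W.f n W.b * Real.sin W.β - W.g n W.b * Real.cos W.β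

theorem Eig.fg_eq (n : ℤ) {x : ℝ} (hx : x ∈ Icc W.a W.b) :
    (W.f n x : ℂ) = W.d n * W.X (W.lam n) x ∧ (W.g n x : ℂ) = W.d n * W.Y (W.lam n) x := by
  have h1 := Real.sin_sq_add_cos_sq W.β
  have h2 := W.hbcb n
  refine W.toBun.eq_smul (W.hu n) (W.d n) ?_ ?_ hx
  · rw [← Complex.ofReal_mul]; congr 1; simp only [Eig.d]
    linear_combination (-W.f n W.b) * h1 + Real.cos W.β * h2
  · rw [← Complex.ofReal_neg, ← Complex.ofReal_mul]; congr 1; simp only [Eig.d]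
    linear_combination (-W.g n W.b) * h1 + Real.sin W.β * h2

theorem Eig.orth (m n : ℤ) : (W.d m : ℂ) * W.d n * W.inn (W.lam m) (W.lam n) = if m = n then 1 else 0 := by
  have h := congrArg (fun x : ℝ => (x : ℂ)) (W.horth m n)
  simp only [← intervalIntegral.integral_ofReal] at h
  rw [Bun.inn, ← intervalIntegral.integral_const_mul]
  have e : ((if m = n then (1:ℝ) else 0 : ℝ) : ℂ) = if m = n then 1 else 0 := by split_ifs <;> simp
  rw [← e, ← h]
  apply intervalIntegral.integral_congr
  intro x hx
  rw [uIcc_of_le W.hab.le] at hx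
  have h1 := W.fg_eq m hx
  have h2 := W.fg_eq n hx
  push_cast
  rw [h1.1, h1.2, h2.1, h2.2]
  ring

theorem Eig.d_ne (n : ℤ) : (W.d n : ℂ) ≠ 0 := by
  intro h
  have := W.orth n n
  rw [h] at this
  simp at this

theorem Eig.inn_ne (n : ℤ) : W.inn (W.lam n) (W.lam n) ≠ 0 := by
  intro h
  have := W.orth n n
  rw [h] at this
  simp at this

theorem Eig.om_lam (n : ℤ) : W.om (W.lam n) = 0 := by
  have h := W.fg_eq n (left_mem_Icc.2 W.hab.le)
  have h1 : (W.d n : ℂ) * W.om (W.lam n) = ((W.f n W.a * Real.cos W.α + W.g n W.a * Real.sin W.α : ℝ) : ℂ) := by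
    push_cast
    rw [h.1, h.2, Bun.om]; push_cast; ring
  rw [W.hbca, Complex.ofReal_zero] at h1
  exact (mul_eq_zero.1 h1).resolve_left (W.d_ne n)

theorem Eig.lam_inj : Function.Injective W.lam := by
  intro m n h
  by_contra hne
  have := W.orth m n
  rw [if_neg hne, h] at this
  rcases mul_eq_zero.1 this with h1 | h1
  · rcases mul_eq_zero.1 h1 with h2 | h2
    · exact W.d_ne _ h2
    · exact W.d_ne _ h2
  · exact W.inn_ne n h1

theorem Eig.lam_strict : StrictMono W.lam :=
  (monotone_int_of_le_succ W.hord).strictMono_of_injective W.lam_inj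

/-- boundary amplitude -/
noncomputable def Eig.cc (n : ℤ) : ℝ := W.f n W.a * Real.sin W.α - W.g n W.a * Real.cos W.α

theorem Eig.f_a (n : ℤ) : W.f n W.a = W.cc n * Real.sin W.α := by
  simp only [Eig.cc]
  linear_combination (-W.f n W.a) * Real.sin_sq_add_cos_sq W.α + Real.cos W.α * W.hbca n

theorem Eig.g_a (n : ℤ) : W.g n W.a = -(W.cc n * Real.cos W.α) := by
  simp only [Eig.cc]
  linear_combination (-W.g n W.a) * Real.sin_sq_add_cos_sq W.α + Real.sin W.α * W.hbca n

theorem Eig.cc_eq (n : ℤ) : (W.cc n : ℂ) = W.d n * W.eta (W.lam n) := by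
  have h := W.fg_eq n (left_mem_Icc.2 W.hab.le)
  simp only [Eig.cc, Bun.eta]
  push_cast
  rw [h.1, h.2]; push_cast; ring

/-- expansion coefficient -/
noncomputable def Eig.co (F G : ℝ → ℝ) (n : ℤ) : ℝ := ∫ x in W.a..W.b, W.r x * (W.f n x * F x + W.g n x * G x)

theorem Eig.co_eq (F G : ℝ → ℝ) (n : ℤ) : (W.co F G n : ℂ) = W.d n * W.num F G (W.lam n) := by
  simp only [Eig.co, Bun.num]
  rw [← intervalIntegral.integral_ofReal, ← intervalIntegral.integral_const_mul]
  apply intervalIntegral.integral_congr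
  intro x hx
  rw [uIcc_of_le W.hab.le] at hx
  have h1 := W.fg_eq n hx
  push_cast
  rw [h1.1, h1.2]; ring

theorem Eig.residue {F G : ℝ → ℝ} (hF : Continuous F) (hG : Continuous G) (n : ℤ) :
    Tendsto (fun z => (z - W.lam n) * (W.num F G z / W.om z)) (𝓝[≠] (W.lam n : ℂ))
      (𝓝 ((W.co F G n * W.cc n : ℝ) : ℂ)) := by
  have hI : Tendsto (fun z => W.inn z (W.lam n)) (𝓝[≠] (W.lam n : ℂ)) (𝓝 (W.inn (W.lam n) (W.lam n))) :=
    ((W.inn_diff (W.lam n)).continuous.tendsto _).mono_left nhdsWithin_le_nhds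
  have hN : Tendsto (fun z => W.num F G z) (𝓝[≠] (W.lam n : ℂ)) (𝓝 (W.num F G (W.lam n))) :=
    ((W.num_diff hF hG).continuous.tendsto _).mono_left nhdsWithin_le_nhds
  have h1 := (hN.mul_const (W.eta (W.lam n))).div hI (W.inn_ne n)
  have e : W.num F G (W.lam n) * W.eta (W.lam n) / W.inn (W.lam n) (W.lam n) = ((W.co F G n * W.cc n : ℝ) : ℂ) := by
    push_cast
    rw [W.co_eq, W.cc_eq, div_eq_iff (W.inn_ne n)]
    have := W.orth n n
    rw [if_pos rfl] at this
    linear_combination (-(W.num F G (W.lam n) * W.eta (W.lam n))) * this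
  rw [e] at h1
  refine h1.congr' ?_
  filter_upwards [self_mem_nhdsWithin, hI.eventually_ne (W.inn_ne n)] with z hz hz'
  have hl := W.lagrange z (W.lam n)
  rw [W.om_lam, mul_zero, sub_zero] at hl
  change (z - W.lam n) * W.inn z (W.lam n) = _ at hl
  have hne : W.om z * W.eta (W.lam n) ≠ 0 := by
    rw [← hl]; exact mul_ne_zero (sub_ne_zero.2 hz) hz'
  have hom : W.om z ≠ 0 := left_ne_zero_of_mul hne
  simp only [Pi.div_apply]
  rw [div_eq_iff hz', ← mul_div_assoc, div_mul_eq_mul_div, eq_div_iff hom]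
  linear_combination (-W.num F G z) * hl

theorem Bun.inn_lower (B : Bun) : ∃ K : ℝ, 0 < K ∧ ∀ l l' : ℝ, K ≤ |l| → K ≤ |l'| →
    |(l - l') * B.len| ≤ Real.pi / 3 → B.len / 4 ≤ (B.inn l l').re := by
  obtain ⟨K, hK0, hK⟩ := B.near
  refine ⟨K, hK0, fun l l' h1 h2 h3 => ?_⟩
  have hc1 := B.hXc l
  have hc2 := B.hXc l'
  have hc3 := B.hYc l
  have hc4 := B.hYc l'
  have hc5 := B.hr.continuous
  have hcc : Continuous fun x => (B.r x : ℂ) * (B.X l x * B.X l' x + B.Y l x * B.Y l' x) := by fun_prop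
  have e : (B.inn l l').re = ∫ x in B.a..B.b, ((B.r x : ℂ) * (B.X l x * B.X l' x + B.Y l x * B.Y l' x)).re :=
    (Complex.reCLM.intervalIntegral_comp_comm (hcc.intervalIntegrable _ _)).symm
  have e2 : B.len / 4 = ∫ x in B.a..B.b, B.r x * (1 / 4) := by
    rw [intervalIntegral.integral_mul_const]; simp only [Bun.len, Dat.S]; ring
  rw [e, e2]
  apply intervalIntegral.integral_mono_on B.hab.le
  · exact Continuous.intervalIntegrable (by fun_prop) _ _
  · exact (Complex.continuous_re.comp hcc).intervalIntegrable _ _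
  · intro x hx
    rw [Complex.re_ofReal_mul]
    exact mul_le_mul_of_nonneg_left (hK l l' h1 h2 h3 x hx) (B.rpos x hx).le

theorem Eig.small {F G : ℝ → ℝ} (hF : ContDiff ℝ 1 F) (hG : ContDiff ℝ 1 G) :
    Tendsto (fun n => W.co F G n * W.cc n) cofinite (𝓝 0) := by
  obtain ⟨K, hK0, hK⟩ := W.inn_lower
  obtain ⟨C, hC0, hC⟩ := W.bound
  obtain ⟨M, hM0, hM⟩ := W.rem_bound hF hG
  have hL := W.len_pos
  set E' : ℂ := F W.a * Real.cos W.α + G W.a * Real.sin W.α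
  set b0 : ℂ := G W.b * Real.sin W.β + F W.b * Real.cos W.β
  have hinv : Tendsto (fun n => 4 / W.len * (2 * C * (‖b0‖ + 2 * C * ‖E'‖ + M)) * |W.lam n|⁻¹) cofinite (𝓝 0) := by
    have := (tendsto_inv_atTop_zero.comp W.hgrow).const_mul (4 / W.len * (2 * C * (‖b0‖ + 2 * C * ‖E'‖ + M)))
    simpa using this
  refine squeeze_zero_norm' ?_ hinv
  filter_upwards [W.hgrow.eventually_ge_atTop K] with n hn
  have hlp : 0 < |W.lam n| := hK0.trans_le hn
  have h1 := hK (W.lam n) (W.lam n) hn hn (by simp; positivity)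
  have h2 : W.d n ^ 2 ≤ 4 / W.len := by
    have h3 := W.orth n n
    rw [if_pos rfl, ← Complex.ofReal_mul] at h3
    have h4 := congrArg Complex.re h3
    rw [Complex.re_ofReal_mul, Complex.one_re] at h4
    rw [le_div_iff₀ hL]
    nlinarith [sq_nonneg (W.d n)]
  have h5 : ‖W.eta (W.lam n)‖ ≤ 2 * C := by
    have := hC (W.lam n) W.a (left_mem_Icc.2 W.hab.le)
    rw [Complex.ofReal_im, abs_zero, zero_mul, Real.exp_zero, mul_one] at this
    refine (norm_sub_le _ _).trans ?_
    rw [norm_mul, norm_mul, Complex.norm_real, Complex.norm_real, Real.norm_eq_abs, Real.norm_eq_abs]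
    have f1 := mul_le_mul this.1 (Real.abs_sin_le_one W.α) (abs_nonneg _) (by positivity)
    have f2 := mul_le_mul this.2 (Real.abs_cos_le_one W.α) (abs_nonneg _) (by positivity)
    linarith
  have h6 : |W.lam n| * ‖W.num F G (W.lam n)‖ ≤ ‖b0‖ + 2 * C * ‖E'‖ + M := by
    have h7 := W.parts hF hG (W.lam n)
    rw [W.om_lam, zero_mul, zero_sub] at h7
    have h8 := congrArg norm h7
    rw [norm_mul, Complex.norm_real, Real.norm_eq_abs] at h8
    rw [h8]
    have h9 := (hM (W.lam n)).1
    rw [Complex.ofReal_im, abs_zero, zero_mul, Real.exp_zero, mul_one] at h9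
    refine (norm_add_le _ _).trans ?_
    gcongr
    refine (norm_add_le _ _).trans ?_
    gcongr
    rw [norm_neg, norm_mul]
    gcongr
  have h10 : ‖W.num F G (W.lam n)‖ ≤ (‖b0‖ + 2 * C * ‖E'‖ + M) * |W.lam n|⁻¹ := by
    rw [← div_eq_mul_inv, le_div_iff₀ hlp]; linarith
  have e : ‖W.co F G n * W.cc n‖ = W.d n ^ 2 * (‖W.eta (W.lam n)‖ * ‖W.num F G (W.lam n)‖) := by
    rw [← Complex.norm_real, Complex.ofReal_mul, W.co_eq, W.cc_eq, norm_mul, norm_mul, norm_mul, Complex.norm_real,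
      Real.norm_eq_abs, ← sq_abs]
    ring
  rw [e]
  calc _ ≤ 4 / W.len * (2 * C * ((‖b0‖ + 2 * C * ‖E'‖ + M) * |W.lam n|⁻¹)) := by gcongr
    _ = _ := by ring

end DiracAux

namespace DiracAux
open Set Filter Topology MeasureTheory


theorem small_of_sin {y : ℝ} (h1 : |y| ≤ Real.pi / 2) (h2 : |Real.sin y| ≤ 1 / 4) : |y| < Real.pi / 6 := by
  have hp := Real.pi_pos
  rw [abs_le] at h1 h2
  rw [abs_lt]
  constructor
  · by_contra! h
    have := Real.sin_le_sin_of_le_of_le_pi_div_two (by linarith) (by linarith) h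
    rw [Real.sin_neg, Real.sin_pi_div_six] at this
    linarith
  · by_contra! h
    have := Real.sin_le_sin_of_le_of_le_pi_div_two (by linarith) (by linarith) h
    rw [Real.sin_pi_div_six] at this
    linarith

theorem Bun.om_real (B : Bun) (x : ℝ) : B.om x = ((B.om x).re : ℂ) := by
  have := B.om_conj x
  rw [Complex.conj_ofReal] at this
  exact (Complex.conj_eq_iff_re.1 this.symm).symm

theorem Bun.om_near_real (B : Bun) : ∃ K : ℝ, 0 < K ∧ ∀ x : ℝ, K ≤ |x| →
    |(B.om x).re - Real.sin (x * B.len + B.c)| ≤ 1 / 4 := by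
  obtain ⟨C, hC0, hC⟩ := B.om_asym
  refine ⟨4 * C + 1, by positivity, fun x hx => ?_⟩
  have h := (hC x).1
  rw [B.om_real] at h
  have e : (((B.om x).re : ℂ) - Complex.sin (x * B.len + B.c)) =
    (((B.om x).re - Real.sin (x * B.len + B.c) : ℝ) : ℂ) := by push_cast; ring
  rw [e, Complex.norm_real, Complex.norm_real, Complex.ofReal_im, abs_zero, zero_mul, Real.exp_zero,
    Real.norm_eq_abs, Real.norm_eq_abs] at h
  have := abs_nonneg ((B.om x).re - Real.sin (x * B.len + B.c))
  nlinarith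

/-- normalised eigenvalues -/
noncomputable def Eig.ze (W : Eig) (n : ℤ) : ℝ := W.lam n * W.len + W.c

theorem Eig.band (W : Eig) : ∃ J : ℕ, ∀ j : ℤ, (J : ℤ) ≤ |j| →
    ∃ n, (j - 1 / 2) * Real.pi < W.ze n ∧ W.ze n < (j + 1 / 2) * Real.pi ∧
      ∀ m, (j - 1 / 2) * Real.pi ≤ W.ze m → W.ze m ≤ (j + 1 / 2) * Real.pi → m = n := by
  obtain ⟨K, hK0, hK⟩ := W.om_near_real
  obtain ⟨K', hK0', hK'⟩ := W.inn_lower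
  have hL := W.len_pos
  have hp := Real.pi_pos
  obtain ⟨J, hJ⟩ := exists_nat_gt (((K + K') * W.len + |W.c|) / Real.pi + 1 / 2)
  have hJ' : (K + K') * W.len + |W.c| < (J - 1 / 2) * Real.pi := by
    rw [← div_lt_iff₀ hp]; linarith
  have far : ∀ (j : ℤ), (J : ℤ) ≤ |j| → ∀ y : ℝ, |y| ≤ Real.pi / 2 → ∀ x : ℝ,
      x * W.len + W.c = y + j * Real.pi → K + K' ≤ |x| := by
    intro j hj y hy x hx
    have h1 : (J : ℝ) ≤ |(j : ℝ)| := by exact_mod_cast hj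
    have h2 : |(j : ℝ)| * Real.pi ≤ |x| * W.len + |W.c| + |y| := by
      have e : (j : ℝ) * Real.pi = x * W.len + W.c - y := by linarith
      calc |(j : ℝ)| * Real.pi = |(j : ℝ) * Real.pi| := by rw [abs_mul, abs_of_pos hp]
        _ = |x * W.len + W.c - y| := by rw [e]
        _ ≤ |x * W.len + W.c| + |y| := abs_sub _ _
        _ ≤ |x * W.len| + |W.c| + |y| := by gcongr; exact abs_add_le _ _
        _ = _ := by rw [abs_mul, abs_of_pos hL]
    have h3 : (J : ℝ) * Real.pi ≤ |(j : ℝ)| * Real.pi := by gcongr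
    have h4 : (K + K') * W.len ≤ |x| * W.len := by linarith
    exact le_of_mul_le_mul_right h4 hL
  have key : ∀ (j : ℤ), (J : ℤ) ≤ |j| → ∀ m, (j - 1 / 2) * Real.pi ≤ W.ze m →
      W.ze m ≤ (j + 1 / 2) * Real.pi → |W.ze m - j * Real.pi| < Real.pi / 6 ∧ K' ≤ |W.lam m| := by
    intro j hj m h1 h2
    have h3 : |W.ze m - j * Real.pi| ≤ Real.pi / 2 := by rw [abs_le]; constructor <;> linarith
    have h4 := far j hj _ h3 (W.lam m) (by simp only [Eig.ze]; ring)
    refine ⟨small_of_sin h3 ?_, by linarith⟩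
    have h5 := hK (W.lam m) (by linarith)
    rw [W.om_lam, Complex.zero_re, zero_sub, abs_neg] at h5
    rw [Real.sin_sub_int_mul_pi, abs_mul, abs_zpow, abs_neg, abs_one, one_zpow, one_mul]
    exact h5
  refine ⟨J, fun j hj => ?_⟩
  set X : ℝ → ℝ := fun y => (y + j * Real.pi - W.c) / W.len
  have hX : ∀ y, X y * W.len + W.c = y + j * Real.pi := by intro y; simp only [X]; field_simp; ring
  set k : ℝ → ℝ := fun y => (-1) ^ j * (W.om (X y)).re
  have hkc : Continuous k := by
    have := W.om_diff.continuous
    have h2 : Continuous X := by simp only [X]; fun_prop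
    exact continuous_const.mul (Complex.continuous_re.comp (this.comp (Complex.continuous_ofReal.comp h2)))
  have hk : ∀ y, |y| ≤ Real.pi / 2 → |k y - Real.sin y| ≤ 1 / 4 := by
    intro y hy
    have h4 := far j hj y hy (X y) (hX y)
    have h5 := hK (X y) (by linarith)
    rw [hX, Real.sin_add_int_mul_pi] at h5
    have h6 : ((-1 : ℝ) ^ j) * (-1) ^ j = 1 := by rw [← mul_zpow]; norm_num
    have e : k y - Real.sin y = (-1) ^ j * ((W.om (X y)).re - (-1) ^ j * Real.sin y) := by
      simp only [k]; linear_combination (Real.sin y) * h6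
    rw [e, abs_mul, abs_zpow, abs_neg, abs_one, one_zpow, one_mul]
    exact h5
  have h1 := hk (Real.pi / 2) (by rw [abs_of_pos (by positivity)])
  have h2 := hk (-(Real.pi / 2)) (by rw [abs_neg, abs_of_pos (by positivity)])
  rw [Real.sin_pi_div_two, abs_le] at h1
  rw [Real.sin_neg, Real.sin_pi_div_two, abs_le] at h2
  obtain ⟨y, hy, hy0⟩ := intermediate_value_Icc (a := -(Real.pi / 2)) (b := Real.pi / 2) (by linarith)
    hkc.continuousOn (show (0 : ℝ) ∈ _ from ⟨by linarith, by linarith⟩)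
  have hy' : |y| ≤ Real.pi / 2 := abs_le.2 hy
  have hz : W.om (X y) = 0 := by
    have h7 : (W.om (X y)).re = 0 := by
      have : (-1 : ℝ) ^ j ≠ 0 := zpow_ne_zero _ (by norm_num)
      exact (mul_eq_zero.1 hy0).resolve_left this
    rw [W.om_real, h7, Complex.ofReal_zero]
  obtain ⟨n, hn⟩ := W.hzero _ hz
  have hn' : X y = W.lam n := by exact_mod_cast hn
  have hzn : W.ze n = y + j * Real.pi := by rw [Eig.ze, ← hn', hX]
  have hb := abs_le.1 hy'
  have hn1 := key j hj n (by rw [hzn]; linarith) (by rw [hzn]; linarith)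
  have hn2 := abs_lt.1 hn1.1
  refine ⟨n, by linarith, by linarith, fun m hm1 hm2 => ?_⟩
  have hm3 := key j hj m hm1 hm2
  have hm4 := abs_lt.1 hm3.1
  by_contra hne
  have h8 := hK' (W.lam m) (W.lam n) hm3.2 hn1.2 (by
    have e : (W.lam m - W.lam n) * W.len = W.ze m - W.ze n := by simp only [Eig.ze]; ring
    rw [e, abs_le]; constructor <;> linarith)
  have h9 := W.orth m n
  rw [if_neg hne] at h9
  have hd1 : (W.d m : ℂ) ≠ 0 := by exact_mod_cast W.d_ne m
  have hd2 : (W.d n : ℂ) ≠ 0 := by exact_mod_cast W.d_ne n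
  have h10 := (mul_eq_zero.1 h9).resolve_left (mul_ne_zero hd1 hd2)
  rw [h10, Complex.zero_re] at h8
  linarith

theorem Eig.main (W : Eig) {F G : ℝ → ℝ} (hF : ContDiff ℝ 1 F) (hG : ContDiff ℝ 1 G) :
    Tendsto (fun N : ℕ => ∑ n ∈ Finset.Icc (-(N : ℤ)) N, W.co F G n * W.cc n) atTop
      (𝓝 (F W.a * Real.sin W.α - G W.a * Real.cos W.α)) := by
  obtain ⟨J, hJ⟩ := W.band
  have hL := W.len_pos
  have hp := Real.pi_pos
  have hzs : StrictMono W.ze := by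
    intro m n h
    have := W.lam_strict h
    simp only [Eig.ze]
    gcongr
  obtain ⟨P, Q, hPQ⟩ := counting W.ze hzs J hJ
  have hinj : Function.Injective (fun n => (W.lam n : ℂ)) := fun m n h => W.lam_inj (Complex.ofReal_injective h)
  set A : ℤ → ℝ := fun n => W.co F G n * W.cc n
  refine shift_all A (W.small hF hG) _ P Q ?_
  have hlim := W.circle_limit hF hG
  have hev : ∀ᶠ k : ℕ in atTop, (∮ z in C((W.cen : ℂ), W.rad k), W.num F G z / W.om z) =
      2 * Real.pi * Complex.I * ((∑ n ∈ Finset.Icc (P - k) (Q + k), A n : ℝ) : ℂ) := by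
    filter_upwards [W.om_lower, eventually_ge_atTop J] with k hk1 hk2
    have hmem : ∀ n, |W.lam n - W.cen| < W.rad k ↔ P - k ≤ n ∧ n ≤ Q + k := by
      intro n
      rw [← hPQ k hk2 n]
      have e : W.ze n = (W.lam n - W.cen) * W.len := by
        simp only [Eig.ze, Bun.cen]; field_simp; ring
      rw [e, abs_mul, abs_of_pos hL, Bun.rad, lt_div_iff₀ hL]
    have hball : ∀ n, (W.lam n : ℂ) ∈ Metric.ball (W.cen : ℂ) (W.rad k) ↔ P - k ≤ n ∧ n ≤ Q + k := by
      intro n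
      rw [← hmem n, Metric.mem_ball, Complex.dist_eq, ← Complex.ofReal_sub, Complex.norm_real, Real.norm_eq_abs]
    rw [DiracAux.residue ((Finset.Icc (P - k) (Q + k)).image (fun n => (W.lam n : ℂ))) (W.cen : ℂ) (W.rad k)
      (fun z => (A (Function.invFun (fun n => (W.lam n : ℂ)) z) : ℂ)) ?_ (W.rad_pos k) _ ?_ ?_]
    · rw [Finset.sum_image (fun x _ y _ h => hinj h)]
      push_cast
      congr 1
      apply Finset.sum_congr rfl
      intro n _
      rw [Function.leftInverse_invFun hinj n]
    · intro s hs
      obtain ⟨n, hn, rfl⟩ := Finset.mem_image.1 hs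
      exact (hball n).2 (Finset.mem_Icc.1 hn)
    · intro z hz hzS
      refine (W.num_diff hF.continuous hG.continuous z).div (W.om_diff z) ?_
      intro h0
      obtain ⟨n, rfl⟩ := W.hzero z h0
      rcases (Metric.mem_closedBall.1 hz).lt_or_eq with h | h
      · exact hzS (Finset.mem_image.2 ⟨n, Finset.mem_Icc.2 ((hball n).1 h), rfl⟩)
      · have := (hk1 _ (Metric.mem_sphere.2 h)).1
        rw [h0, norm_zero, mul_zero] at this
        exact absurd this (not_le.2 (Real.exp_pos _))
    · intro s hs
      obtain ⟨n, hn, rfl⟩ := Finset.mem_image.1 hs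
      have := Function.leftInverse_invFun hinj n
      rw [this]
      exact W.residue hF.continuous hG.continuous n
  have h2 := hlim.congr' hev
  have h3 := h2.const_mul (2 * Real.pi * Complex.I)⁻¹
  have hne : (2 * Real.pi * Complex.I : ℂ) ≠ 0 := Complex.two_pi_I_ne_zero
  simp only [inv_mul_cancel_left₀ hne] at h3
  have h4 := (Complex.continuous_re.tendsto _).comp h3
  simp only [Function.comp_def, Complex.ofReal_re] at h4
  convert h4 using 2
  rw [← Complex.ofReal_mul, ← Complex.ofReal_mul, ← Complex.ofReal_sub, Complex.ofReal_re]

end DiracAux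

namespace DiracAux
open Set Filter Topology MeasureTheory


theorem diff_congr {f g : ℂ → ℂ} (h : Differentiable ℂ f) (e : ∀ l, g l = f l) : Differentiable ℂ g := by
  have : g = f := funext e
  rw [this]; exact h

theorem Dat.exists_bun (D : Dat) : ∃ B : Bun, B.toDat = D := by
  let E11 : (ℂ × ℂ) →L[ℂ] (ℂ × ℂ) := (ContinuousLinearMap.inl ℂ ℂ ℂ).comp (ContinuousLinearMap.fst ℂ ℂ ℂ)
  let E12 : (ℂ × ℂ) →L[ℂ] (ℂ × ℂ) := (ContinuousLinearMap.inl ℂ ℂ ℂ).comp (ContinuousLinearMap.snd ℂ ℂ ℂ)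
  let E21 : (ℂ × ℂ) →L[ℂ] (ℂ × ℂ) := (ContinuousLinearMap.inr ℂ ℂ ℂ).comp (ContinuousLinearMap.fst ℂ ℂ ℂ)
  let E22 : (ℂ × ℂ) →L[ℂ] (ℂ × ℂ) := (ContinuousLinearMap.inr ℂ ℂ ℂ).comp (ContinuousLinearMap.snd ℂ ℂ ℂ)
  have c1 := D.hp.continuous
  have c2 := D.hq.continuous
  have c3 := D.ht.continuous
  have c4 := D.hr.continuous
  let A : ℝ → (ℂ × ℂ) →L[ℂ] (ℂ × ℂ) := fun s =>
    (-(D.t s : ℂ)) • E11 + (-(D.q s : ℂ)) • E12 + ((D.p s : ℂ) • E21 + (D.t s : ℂ) • E22)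
  let B : ℝ → (ℂ × ℂ) →L[ℂ] (ℂ × ℂ) := fun s => (D.r s : ℂ) • E12 + (-(D.r s : ℂ)) • E21
  have hA : Continuous A := by simp only [A]; fun_prop
  have hB : Continuous B := by simp only [B]; fun_prop
  obtain ⟨χ, hd, hχ⟩ := ode_exist D.a D.b D.hab.le A B hA hB ((Real.sin D.β : ℂ), -(Real.cos D.β : ℂ))
  let Φ : ℂ → ℝ → ℂ × ℂ := fun l s => (A s + l • B s) (χ l (projIcc D.a D.b D.hab.le s))
  have hΦ : ∀ l, Continuous (Φ l) := fun l =>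
    (hA.add (hB.const_smul l)).clm_apply ((χ l).continuous.comp continuous_projIcc)
  let U : ℂ → ℝ → ℂ × ℂ := fun l x => ((Real.sin D.β : ℂ), -(Real.cos D.β : ℂ)) + ∫ s in D.b..x, Φ l s
  have hU : ∀ l x, HasDerivAt (U l) (Φ l x) x := fun l x =>
    (intervalIntegral.integral_hasDerivAt_right ((hΦ l).intervalIntegrable _ _)
    ((hΦ l).stronglyMeasurableAtFilter _ _) (hΦ l).continuousAt).const_add _
  have hUc : ∀ l, Continuous (U l) := fun l =>
    continuous_iff_continuousAt.2 fun x => (hU l x).continuousAt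
  have hUχ : ∀ l x, ∀ hx : x ∈ Icc D.a D.b, U l x = χ l ⟨x, hx⟩ := fun l x hx => (hχ l ⟨x, hx⟩).symm
  have hUχ' : ∀ l, ∀ x ∈ Icc D.a D.b, U l x = χ l (projIcc D.a D.b D.hab.le x) := by
    intro l x hx
    rw [projIcc_of_mem D.hab.le hx]; exact hUχ l x hx
  have hev : ∀ x : Icc D.a D.b, Differentiable ℂ fun l => χ l x := fun x =>
    (ContinuousMap.evalCLM ℂ x : C(Icc D.a D.b, ℂ × ℂ) →L[ℂ] ℂ × ℂ).differentiable.comp hd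
  have hΦe : ∀ l, ∀ x ∈ Icc D.a D.b, Φ l x =
      (-(D.t x : ℂ) * (U l x).1 - (D.q x - l * D.r x) * (U l x).2,
        (D.t x : ℂ) * (U l x).2 + (D.p x - l * D.r x) * (U l x).1) := by
    intro l x hx
    simp only [Φ]
    rw [← hUχ' l x hx]
    ext
    · simp [A, B, E11, E12, E21, E22]; ring
    · simp [A, B, E11, E12, E21, E22]; ring
  refine ⟨{ toDat := D, X := fun l x => (U l x).1, Y := fun l x => (U l x).2
            hXc := fun l => (hUc l).fst, hYc := fun l => (hUc l).snd
            hX := ?_, hY := ?_, hXb := ?_, hYb := ?_, hdX := ?_, hdY := ?_, hdN := ?_ }, rfl⟩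
  · intro l x hx
    have := (ContinuousLinearMap.fst ℝ ℂ ℂ).hasFDerivAt.comp_hasDerivAt x (hU l x)
    refine this.congr_deriv ?_
    rw [hΦe l x hx]; rfl
  · intro l x hx
    have := (ContinuousLinearMap.snd ℝ ℂ ℂ).hasFDerivAt.comp_hasDerivAt x (hU l x)
    refine this.congr_deriv ?_
    rw [hΦe l x hx]; rfl
  · intro l; simp [U]
  · intro l; simp [U]
  · have h := (hev ⟨D.a, left_mem_Icc.2 D.hab.le⟩).fst
    change Differentiable ℂ (fun l => (U l D.a).1)
    refine diff_congr h fun l => ?_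
    rw [hUχ]
  · have h := (hev ⟨D.a, left_mem_Icc.2 D.hab.le⟩).snd
    change Differentiable ℂ (fun l => (U l D.a).2)
    refine diff_congr h fun l => ?_
    rw [hUχ]
  · intro F G hF hG
    let M : ℝ → (ℂ × ℂ) →L[ℂ] (ℂ × ℂ) := fun s => F s • E11 + G s • E12
    have hM : Continuous M := by simp only [M]; fun_prop
    have h := ((ContinuousMap.evalCLM ℂ (⟨D.a, left_mem_Icc.2 D.hab.le⟩ : Icc D.a D.b) :
      C(Icc D.a D.b, ℂ × ℂ) →L[ℂ] ℂ × ℂ).differentiable.comp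
      ((voltC D.a D.b D.hab.le M hM).differentiable.comp hd)).fst.neg
    refine diff_congr h fun l => ?_
    have hc : Continuous fun s => M s (χ l (projIcc D.a D.b D.hab.le s)) :=
      hM.clm_apply ((χ l).continuous.comp continuous_projIcc)
    change _ = -(∫ s in D.b..D.a, M s (χ l (projIcc D.a D.b D.hab.le s))).1
    rw [intervalIntegral.integral_symm D.a D.b, Prod.fst_neg, neg_neg]
    have e := (ContinuousLinearMap.fst ℂ ℂ ℂ).intervalIntegral_comp_comm (hc.intervalIntegrable (μ := volume) D.a D.b)
    refine Eq.trans ?_ e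
    apply intervalIntegral.integral_congr
    intro x hx
    rw [uIcc_of_le D.hab.le] at hx
    simp only
    rw [← hUχ' l x hx]
    simp [M, E11, E12]; ring

theorem extend {a b : ℝ} (hab : a < b) {p : ℝ → ℝ} (hp : ContDiffOn ℝ 1 p (Icc a b)) :
    ∃ P : ℝ → ℝ, ContDiff ℝ 1 P ∧ ∀ x ∈ Icc a b, P x = p x := by
  have hu := uniqueDiffOn_Icc hab
  have hc : ContinuousOn (derivWithin p (Icc a b)) (Icc a b) := hp.continuousOn_derivWithin hu le_rfl
  let d : ℝ → ℝ := IccExtend hab.le ((Icc a b).domRestrict (derivWithin p (Icc a b)))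
  have hd : Continuous d := (continuousOn_iff_continuous_domRestrict.1 hc).Icc_extend'
  have hde : ∀ x ∈ Icc a b, d x = derivWithin p (Icc a b) x := fun x hx => by
    simp only [d]; rw [IccExtend_of_mem hab.le _ hx]; rfl
  have hD : ∀ x, HasDerivAt (fun x => p a + ∫ s in a..x, d s) (d x) x := fun x =>
    (intervalIntegral.integral_hasDerivAt_right (hd.intervalIntegrable _ _)
    (hd.stronglyMeasurableAtFilter _ _) hd.continuousAt).const_add _
  refine ⟨fun x => p a + ∫ s in a..x, d s, ?_, fun x hx => ?_⟩
  · rw [contDiff_one_iff_deriv]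
    refine ⟨fun x => (hD x).differentiableAt, ?_⟩
    have : deriv (fun x => p a + ∫ s in a..x, d s) = d := funext fun x => (hD x).deriv
    rw [this]; exact hd
  · have h1 : ∫ s in a..x, d s = p x - p a := by
      have hsub : Icc a x ⊆ Icc a b := Icc_subset_Icc_right hx.2
      apply intervalIntegral.integral_eq_sub_of_hasDerivAt_of_le hx.1
      · exact hp.continuousOn.mono hsub
      · intro y hy
        have hy' : y ∈ Ioo a b := ⟨hy.1, hy.2.trans_le hx.2⟩
        rw [hde y (Ioo_subset_Icc_self hy')]
        exact ((hp.differentiableOn one_ne_zero y (Ioo_subset_Icc_self hy')).hasDerivWithinAt).hasDerivAt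
          (Icc_mem_nhds hy'.1 hy'.2)
      · exact hd.intervalIntegrable _ _
    simp [h1]

end DiracAux

namespace DiracAux
open Set Filter Topology MeasureTheory

theorem sys_congr {a b : ℝ} {p q t r p' q' t' r' : ℝ → ℝ} (hp : ∀ x ∈ Icc a b, p' x = p x)
    (hq : ∀ x ∈ Icc a b, q' x = q x) (ht : ∀ x ∈ Icc a b, t' x = t x) (hr : ∀ x ∈ Icc a b, r' x = r x)
    {l : ℝ} {f g : ℝ → ℝ} (h : SatisfiesDiracSystem a b p q t r l f g) :
    SatisfiesDiracSystem a b p' q' t' r' l f g := by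
  obtain ⟨f', g', h1, h2, h3, h4, h5, h6⟩ := h
  refine ⟨f', g', h1, h2, h3, h4, fun x hx => ?_, fun x hx => ?_⟩
  · rw [hp x hx, ht x hx, hr x hx]; exact h5 x hx
  · rw [hq x hx, ht x hx, hr x hx]; exact h6 x hx

theorem eigen_of_zero (B : Bun) {l : ℝ} (h : B.om l = 0) :
    IsDiracEigenvalue B.a B.b B.p B.q B.t B.r B.α B.β l := by
  have c1 := B.hp.continuous
  have c2 := B.hq.continuous
  have c3 := B.ht.continuous
  have c4 := B.hr.continuous
  have c5 := B.hXc l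
  have c6 := B.hYc l
  have hre : ∀ {u : ℝ → ℂ} {u' : ℂ} {x : ℝ}, HasDerivAt u u' x → HasDerivAt (fun x => (u x).re) u'.re x :=
    fun h => Complex.reCLM.hasFDerivAt.comp_hasDerivAt _ h
  refine ⟨fun x => (B.X l x).re, fun x => (B.Y l x).re,
    ⟨fun x => -B.t x * (B.X l x).re - (B.q x - l * B.r x) * (B.Y l x).re,
     fun x => B.t x * (B.Y l x).re + (B.p x - l * B.r x) * (B.X l x).re, ?_, ?_, ?_, ?_, ?_, ?_⟩, ?_, ?_, ?_⟩
  · intro x hx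
    exact ((hre (B.hX l x hx)).congr_deriv (by simp)).hasDerivWithinAt
  · intro x hx
    exact ((hre (B.hY l x hx)).congr_deriv (by simp)).hasDerivWithinAt
  · exact Continuous.continuousOn (by fun_prop)
  · exact Continuous.continuousOn (by fun_prop)
  · intro x _; ring
  · intro x _; ring
  · refine ⟨B.b, right_mem_Icc.2 B.hab.le, ?_⟩
    simp only [B.hXb, B.hYb, Complex.neg_re, Complex.ofReal_re]
    by_contra! hc
    have := Real.sin_sq_add_cos_sq B.β
    rw [hc.1, neg_eq_zero.1 hc.2] at this
    norm_num at this
  · have := congrArg Complex.re h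
    rw [Bun.om, Complex.add_re, Complex.re_mul_ofReal, Complex.re_mul_ofReal] at this
    exact this
  · simp only [B.hXb, B.hYb, Complex.neg_re, Complex.ofReal_re]
    ring

theorem core (D : Dat) (lam : ℤ → ℝ) (f g : ℤ → ℝ → ℝ)
    (heig : ∀ n : ℤ, SatisfiesDiracSystem D.a D.b D.p D.q D.t D.r (lam n) (f n) (g n) ∧
      DiracBC D.a D.b D.α D.β (f n) (g n))
    (hord : ∀ n : ℤ, lam n ≤ lam (n + 1))
    (hgrow : Tendsto (fun n : ℤ => |lam n|) cofinite atTop)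
    (hcomplete : ∀ μ : ℝ, IsDiracEigenvalue D.a D.b D.p D.q D.t D.r D.α D.β μ → ∃ n, lam n = μ)
    (horth : ∀ m n : ℤ,
      (∫ x in D.a..D.b, D.r x * (f m x * f n x + g m x * g n x)) = if m = n then 1 else 0)
    {F G : ℝ → ℝ} (hF : ContDiff ℝ 1 F) (hG : ContDiff ℝ 1 G)
    (C : ℤ → ℝ) (hC : ∀ n, C n = ∫ x in D.a..D.b, D.r x * (f n x * F x + g n x * G x)) :
    Tendsto
      (fun N : ℕ =>
        ((∑ n ∈ Finset.Icc (-(N : ℤ)) (N : ℤ), C n * f n D.a),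
         (∑ n ∈ Finset.Icc (-(N : ℤ)) (N : ℤ), C n * g n D.a)))
      atTop
      (𝓝 (Real.sin D.α ^ 2 * F D.a - Real.sin D.α * Real.cos D.α * G D.a,
             -(Real.sin D.α * Real.cos D.α) * F D.a + Real.cos D.α ^ 2 * G D.a)) := by
  obtain ⟨B, rfl⟩ := D.exists_bun
  have hof : ∀ {u : ℝ → ℝ} {u' : ℝ} {s : Set ℝ} {x : ℝ}, HasDerivWithinAt u u' s x →
      HasDerivWithinAt (fun x => (u x : ℂ)) (u' : ℂ) s x :=
    fun h => Complex.ofRealCLM.hasFDerivAt.comp_hasDerivWithinAt _ h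
  let W : Eig :=
    { toBun := B, lam := lam, f := f, g := g
      hu := by
        intro n x hx
        obtain ⟨⟨f', g', h1, h2, _, _, h5, h6⟩, _⟩ := heig n
        refine ⟨(hof (h1 x hx)).congr_deriv ?_, (hof (h2 x hx)).congr_deriv ?_⟩
        · have : f' x = -B.t x * f n x - (B.q x - lam n * B.r x) * g n x := by linarith [h6 x hx]
          rw [this]; push_cast; ring
        · have : g' x = B.t x * g n x + (B.p x - lam n * B.r x) * f n x := by linarith [h5 x hx]
          rw [this]; push_cast; ring
      hbca := fun n => (heig n).2.1
      hbcb := fun n => (heig n).2.2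
      hord := hord
      hgrow := hgrow
      hzero := by
        intro l hl
        have him := B.real_of_zero hl
        have hlr : l = ((l.re : ℝ) : ℂ) := by
          apply Complex.ext <;> simp [him]
        rw [hlr] at hl
        obtain ⟨n, hn⟩ := hcomplete l.re (eigen_of_zero B hl)
        exact ⟨n, by rw [hn]; exact hlr⟩
      horth := horth }
  have hm := W.main hF hG
  have hco : ∀ n, C n = W.co F G n := hC
  have hfa : ∀ n, f n B.a = W.cc n * Real.sin B.α := W.f_a
  have hga : ∀ n, g n B.a = -(W.cc n * Real.cos B.α) := W.g_a
  have hm' : Tendsto (fun N : ℕ => ∑ n ∈ Finset.Icc (-(N : ℤ)) N, W.co F G n * W.cc n) atTop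
      (𝓝 (F B.a * Real.sin B.α - G B.a * Real.cos B.α)) := hm
  refine Tendsto.prodMk_nhds ?_ ?_
  · convert hm'.mul_const (Real.sin B.α) using 2
    · rw [Finset.sum_mul]
      exact Finset.sum_congr rfl fun n _ => by rw [hco, hfa]; ring
    · ring
  · convert hm'.mul_const (-Real.cos B.α) using 2
    · rw [Finset.sum_mul]
      exact Finset.sum_congr rfl fun n _ => by rw [hco, hga]; ring
    · ring

end DiracAux

/-- At the left endpoint `x = a` the symmetric partial sums converge to
`(sin²α F₁(a) - sin α cos α F₂(a), -sin α cos α F₁(a) + cos²α F₂(a))`. -/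
theorem dirac_expansion_left_endpoint
    (a b : ℝ) (hab : a < b)
    (p q t ρ : ℝ → ℝ)
    (hp : ContDiffOn ℝ 1 p (Set.Icc a b)) (hq : ContDiffOn ℝ 1 q (Set.Icc a b))
    (ht : ContDiffOn ℝ 1 t (Set.Icc a b)) (hρ : ContDiffOn ℝ 1 ρ (Set.Icc a b))
    (hρpos : ∀ x ∈ Set.Icc a b, 0 < ρ x)
    (α β : ℝ) (hα : α ∈ Set.Ico 0 (2 * Real.pi)) (hβ : β ∈ Set.Ico 0 (2 * Real.pi))
    -- the listing of all eigenvalues with eigenfunctions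
    (lam : ℤ → ℝ) (f g : ℤ → ℝ → ℝ)
    (heig : ∀ n : ℤ, SatisfiesDiracSystem a b p q t ρ (lam n) (f n) (g n) ∧
      DiracBC a b α β (f n) (g n))
    (hord : ∀ n : ℤ, lam n ≤ lam (n + 1))
    (hgrow : Filter.Tendsto (fun n : ℤ => |lam n|) Filter.cofinite Filter.atTop)
    (hcomplete : ∀ μ : ℝ, IsDiracEigenvalue a b p q t ρ α β μ → ∃ n, lam n = μ)
    (horth : ∀ m n : ℤ,
      (∫ x in a..b, ρ x * (f m x * f n x + g m x * g n x)) = if m = n then 1 else 0)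
    -- the expanded function and its expansion coefficients
    (F₁ F₂ : ℝ → ℝ)
    (hF₁ : ContDiffOn ℝ 1 F₁ (Set.Icc a b)) (hF₂ : ContDiffOn ℝ 1 F₂ (Set.Icc a b))
    (C : ℤ → ℝ)
    (hC : ∀ n, C n = ∫ x in a..b, ρ x * (f n x * F₁ x + g n x * F₂ x)) :
    Filter.Tendsto
      (fun N : ℕ =>
        ((∑ n ∈ Finset.Icc (-(N : ℤ)) (N : ℤ), C n * f n a),
         (∑ n ∈ Finset.Icc (-(N : ℤ)) (N : ℤ), C n * g n a)))
      Filter.atTop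
      (nhds (Real.sin α ^ 2 * F₁ a - Real.sin α * Real.cos α * F₂ a,
             -(Real.sin α * Real.cos α) * F₁ a + Real.cos α ^ 2 * F₂ a)) := by
  classical
  obtain ⟨p', hp', ep⟩ := DiracAux.extend hab hp
  obtain ⟨q', hq', eq⟩ := DiracAux.extend hab hq
  obtain ⟨t', ht', et⟩ := DiracAux.extend hab ht
  obtain ⟨r', hr', er⟩ := DiracAux.extend hab hρ
  obtain ⟨F, hF, eF⟩ := DiracAux.extend hab hF₁
  obtain ⟨G, hG, eG⟩ := DiracAux.extend hab hF₂
  have ha : a ∈ Set.Icc a b := Set.left_mem_Icc.2 hab.le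
  rw [← eF a ha, ← eG a ha]
  refine DiracAux.core
    { a := a, b := b, hab := hab, p := p', q := q', t := t', r := r', hp := hp', hq := hq', ht := ht',
      hr := hr', rpos := fun x hx => by rw [er x hx]; exact hρpos x hx
      α := α, β := β } lam f g ?_ hord hgrow ?_ ?_ hF hG C ?_
  · exact fun n => ⟨DiracAux.sys_congr ep eq et er (heig n).1, (heig n).2⟩
  · rintro μ ⟨u, v, h1, h2, h3⟩
    exact hcomplete μ ⟨u, v, DiracAux.sys_congr (fun x hx => (ep x hx).symm) (fun x hx => (eq x hx).symm)
      (fun x hx => (et x hx).symm) (fun x hx => (er x hx).symm) h1, h2, h3⟩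
  · intro m n
    rw [← horth m n]
    apply intervalIntegral.integral_congr
    intro x hx
    rw [Set.uIcc_of_le hab.le] at hx
    simp only [er x hx]
  · intro n
    rw [hC n]
    apply intervalIntegral.integral_congr
    intro x hx
    rw [Set.uIcc_of_le hab.le] at hx
    simp only [er x hx, eF x hx, eG x hx]
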